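/- There exist a constant c > 0 and an integer d₀ such that for all d ≥ d₀, every d-regular graph G has a spanning subgraph H with girth at least 8 (i.e., H contains no cycle of length at most 7) and minimum degree δ(H) ≥ c·d^{1/3}. -/

import Mathlib

open SimpleGraph

def ContainsCopy {α β : Type*} (F : SimpleGraph α) (H : SimpleGraph β) : Prop :=
  ∃ f : F →g H, Function.Injective f

abbrev GraphFamily := Set (Σ n : ℕ, SimpleGraph (Fin n))

def FamFree {β : Type*} (H : SimpleGraph β) (𝓕 : GraphFamily) : Prop :=
  ∀ F ∈ 𝓕, ¬ ContainsCopy F.2 H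

noncomputable def extremalNum (n : ℕ) (𝓕 : GraphFamily) : ℕ :=
  sSup {k | ∃ H : SimpleGraph (Fin n), FamFree H 𝓕 ∧ k = H.edgeSet.ncard}

def LocallyInjective {α β : Type*} {F : SimpleGraph α} {G : SimpleGraph β}
    (φ : F →g G) : Prop :=
  ∀ v : α, Set.InjOn φ (F.neighborSet v)

def NoLocInjHom {α β : Type*} (F : SimpleGraph α) (G : SimpleGraph β) : Prop :=
  ¬ ∃ φ : F →g G, LocallyInjective φ

def ClosedFamily (𝓕 : GraphFamily) : Prop :=
  ∀ (W : Type) [Fintype W] (G : SimpleGraph W),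
    (∀ F ∈ 𝓕, NoLocInjHom F.2 G) ↔ FamFree G 𝓕

noncomputable def deg {β : Type*} (H : SimpleGraph β) (v : β) : ℕ :=
  (H.neighborSet v).ncard

noncomputable def minDeg {β : Type*} [Fintype β] (H : SimpleGraph β) : ℕ :=
  ⨅ v, deg H v

noncomputable def maxDeg {β : Type*} [Fintype β] (H : SimpleGraph β) : ℕ :=
  ⨆ v, deg H v

def RegularDeg {β : Type*} (G : SimpleGraph β) (d : ℕ) : Prop :=
  ∀ v, deg G v = d

noncomputable def Bad {α γ : Type*} (G : SimpleGraph α) (χ : α → γ) (v : α) : ℕ :=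
  {u | u ∈ G.neighborSet v ∧ ∃ v', v' ∈ G.neighborSet u ∧ v' ≠ v ∧ χ v' = χ v}.ncard

set_option linter.unusedSectionVars false
set_option linter.unusedVariables false
namespace GQ8
open Finset

section Prob
variable {V C : Type*} [Fintype V] [DecidableEq V] [Fintype C] [DecidableEq C]

noncomputable def Ex (f : (V → C) → ℝ) : ℝ := (∑ φ, f φ) / (Fintype.card (V → C) : ℝ)

def DepOn {R : Type*} (f : (V → C) → R) (S : Finset V) : Prop :=
  ∀ φ φ' : V → C, (∀ v ∈ S, φ v = φ' v) → f φ = f φ'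

theorem DepOn.mono {R : Type*} {f : (V → C) → R} {S T : Finset V} (h : DepOn f S) (hST : S ⊆ T) :
    DepOn f T := fun φ φ' hh => h φ φ' (fun v hv => hh v (hST hv))

theorem Ex_mono {f g : (V → C) → ℝ} (h : ∀ φ, f φ ≤ g φ) : Ex f ≤ Ex g := by
  unfold Ex
  gcongr with φ
  exact h φ

theorem Ex_nonneg {f : (V → C) → ℝ} (h : ∀ φ, 0 ≤ f φ) : 0 ≤ Ex f := by
  unfold Ex
  exact div_nonneg (Finset.sum_nonneg (fun φ _ => h φ)) (by positivity)

theorem Ex_sum {ι : Type*} (s : Finset ι) (f : ι → (V → C) → ℝ) :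
    Ex (fun φ => ∑ i ∈ s, f i φ) = ∑ i ∈ s, Ex (f i) := by
  unfold Ex
  rw [Finset.sum_comm, Finset.sum_div]

theorem Ex_const_mul (a : ℝ) (f : (V → C) → ℝ) : Ex (fun φ => a * f φ) = a * Ex f := by
  unfold Ex
  rw [← Finset.mul_sum, mul_div_assoc]

theorem Ex_sub (f g : (V → C) → ℝ) : Ex (fun φ => f φ - g φ) = Ex f - Ex g := by
  unfold Ex
  rw [Finset.sum_sub_distrib, sub_div]

theorem Ex_one [Nonempty C] : Ex (fun _ : V → C => (1 : ℝ)) = 1 := by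
  unfold Ex
  have : (Fintype.card (V → C) : ℝ) ≠ 0 := by
    exact_mod_cast Fintype.card_ne_zero
  rw [Finset.sum_const, Finset.card_univ, nsmul_eq_mul, mul_one, div_self this]

theorem Ex_mul [Nonempty C] (f g : (V → C) → ℝ) (S T : Finset V) (hST : Disjoint S T)
    (hf : DepOn f S) (hg : DepOn g T) : Ex (fun φ => f φ * g φ) = Ex f * Ex g := by
  have hc : (Fintype.card (V → C) : ℝ) ≠ 0 := by
    exact_mod_cast Fintype.card_ne_zero
  let e : (V → C) × (V → C) → (V → C) × (V → C) :=
    fun p => (S.piecewise p.1 p.2, S.piecewise p.2 p.1)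
  have he : Function.Involutive e := by
    rintro ⟨a, b⟩
    simp only [e, Prod.mk.injEq]
    constructor <;> (funext v; by_cases hv : v ∈ S <;> simp [Finset.piecewise, hv])
  have h1 : ∑ p : (V → C) × (V → C), f p.1 * g p.2 = ∑ p : (V → C) × (V → C), f p.1 * g p.1 := by
    rw [← Equiv.sum_comp (he.toPerm)]
    refine Finset.sum_congr rfl ?_
    rintro ⟨a, b⟩ _
    have e1 : f (S.piecewise a b) = f a := hf _ _ (fun v hv => by simp [Finset.piecewise, hv])
    have e2 : g (S.piecewise b a) = g a := hg _ _ (fun v hv => by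
      have : v ∉ S := fun h => (Finset.disjoint_left.mp hST h) hv
      simp [Finset.piecewise, this])
    simp [Function.Involutive.toPerm, e, e1, e2]
  rw [Fintype.sum_prod_type, Fintype.sum_prod_type] at h1
  simp only [Finset.sum_const, Finset.card_univ, nsmul_eq_mul] at h1
  rw [← Finset.mul_sum] at h1
  simp only [← Finset.mul_sum] at h1
  rw [← Finset.sum_mul] at h1
  unfold Ex
  field_simp
  linarith

theorem Ex_prod (f : V → C → ℝ) :
    Ex (fun φ => ∏ y, f y (φ y)) = ∏ y, ((∑ c, f y c) / (Fintype.card C : ℝ)) := by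
  unfold Ex
  rw [Finset.prod_div_distrib, Finset.prod_univ_sum, Fintype.piFinset_univ]
  simp

open Classical in
noncomputable def ind (P : Prop) : ℝ := if P then 1 else 0

theorem ind_nonneg (P : Prop) : 0 ≤ ind P := by unfold ind; split_ifs <;> norm_num
theorem ind_le_one (P : Prop) : ind P ≤ 1 := by unfold ind; split_ifs <;> norm_num
theorem ind_true {P : Prop} (h : P) : ind P = 1 := by simp [ind, h]
theorem ind_false {P : Prop} (h : ¬ P) : ind P = 0 := by simp [ind, h]

theorem sum_ind_eq (s : Finset C) (c : C) : ∑ c' ∈ s, ind (c' = c) = ind (c ∈ s) := by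
  by_cases h : c ∈ s
  · rw [Finset.sum_eq_single c, ind_true rfl, ind_true h]
    · intro b _ hb; exact ind_false hb
    · intro h'; exact absurd h h'
  · rw [ind_false h]
    refine Finset.sum_eq_zero (fun b hb => ind_false ?_)
    rintro rfl; exact h hb

/-- probability that `φ v = c` -/
theorem Ex_single [Nonempty C] (v : V) (c : C) :
    Ex (fun φ : V → C => ind (φ v = c)) = 1 / (Fintype.card C : ℝ) := by
  have hc : (Fintype.card C : ℝ) ≠ 0 := by exact_mod_cast Fintype.card_ne_zero
  have := Ex_prod (V := V) (C := C) (fun y c' => if y = v then ind (c' = c) else 1)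
  have h2 : ∀ φ : V → C, ∏ y, (if y = v then ind (φ y = c) else 1) = ind (φ v = c) := by
    intro φ
    rw [Finset.prod_ite_eq' univ v (fun y => ind (φ y = c))]
    simp
  simp only [h2] at this
  rw [this]
  have h3 : ∀ y : V, ((∑ c', if y = v then ind (c' = c) else 1) / (Fintype.card C : ℝ))
      = if y = v then 1 / (Fintype.card C : ℝ) else 1 := by
    intro y
    by_cases hy : y = v
    · simp only [hy, if_true]
      rw [sum_ind_eq, ind_true (Finset.mem_univ c)]
    · simp [hy, hc]
  simp only [h3]
  rw [Finset.prod_ite_eq' univ v (fun y => 1 / (Fintype.card C : ℝ))]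
  simp

theorem Ex_mem [Nonempty C] (v : V) (s : Finset C) :
    Ex (fun φ : V → C => ind (φ v ∈ s)) = (s.card : ℝ) / (Fintype.card C : ℝ) := by
  have : (fun φ : V → C => ind (φ v ∈ s)) = fun φ => ∑ c ∈ s, ind (φ v = c) := by
    funext φ
    rw [← sum_ind_eq]
    exact Finset.sum_congr rfl (fun c _ => congrArg ind (propext eq_comm))
  rw [this, Ex_sum]
  simp only [Ex_single]
  rw [Finset.sum_const, nsmul_eq_mul]; ring

/-- symmetric local lemma -/
theorem LLL [Nonempty C] {ι : Type*} [Fintype ι] [DecidableEq ι] (B : ι → (V → C) → Prop)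
    (scope : ι → Finset V) (hdep : ∀ i, DepOn (B i) (scope i)) (p : ℝ) (D : ℕ)
    (hp0 : 0 ≤ p) (hp : ∀ i, Ex (fun φ => ind (B i φ)) ≤ p)
    (hD : ∀ i, (univ.filter (fun j => ¬ Disjoint (scope i) (scope j))).card ≤ D)
    (hD1 : 1 ≤ D) (hpD : 4 * p * D ≤ 1) : ∃ φ, ∀ i, ¬ B i φ := by
  have hD1' : (1 : ℝ) ≤ D := by exact_mod_cast hD1
  have hp4 : p ≤ 1 / 4 := by nlinarith
  let A : Finset ι → (V → C) → ℝ := fun S φ => ∏ j ∈ S, (1 - ind (B j φ))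
  have hA0 : ∀ S φ, 0 ≤ A S φ := fun S φ => Finset.prod_nonneg (fun j _ => by
    have := ind_le_one (B j φ); linarith)
  have hAmono : ∀ S T φ, S ⊆ T → A T φ ≤ A S φ := by
    intro S T φ h
    refine Finset.prod_le_prod_of_subset_of_le_one h ?_ ?_
    · intro j _; have := ind_le_one (B j φ); linarith
    · intro j _ _; have := ind_nonneg (B j φ); linarith
  let a : Finset ι → ℝ := fun S => Ex (A S)
  have ha0 : ∀ S, 0 ≤ a S := fun S => Ex_nonneg (hA0 S)
  have hins : ∀ S i, i ∉ S → a (insert i S) = a S - Ex (fun φ => ind (B i φ) * A S φ) := by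
    intro S i hi
    simp only [a]
    rw [← Ex_sub]
    congr 1; funext φ
    simp only [A]
    rw [Finset.prod_insert hi]; ring
  have key : ∀ n : ℕ, ∀ S : Finset ι, S.card = n → ∀ i, i ∉ S →
      (1 - 2 * p) * a S ≤ a (insert i S) := by
    intro n
    induction n using Nat.strong_induction_on with
    | _ n ih =>
      intro S hS i hi
      set N := univ.filter (fun j => ¬ Disjoint (scope i) (scope j)) with hN
      set S1 := S \ N with hS1
      have chain : ∀ U : Finset ι, U ⊆ S ∩ N → (1 - 2 * p) ^ U.card * a S1 ≤ a (S1 ∪ U) := by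
        intro U
        induction U using Finset.induction_on with
        | empty => intro _; simp
        | insert x U hx ihU =>
          intro hU
          have hxS : x ∈ S ∩ N := hU (Finset.mem_insert_self _ _)
          have hU' : U ⊆ S ∩ N := fun y hy => hU (Finset.mem_insert_of_mem hy)
          have h1 := ihU hU'
          have hxn : x ∉ S1 ∪ U := by
            simp only [Finset.mem_union, hS1, Finset.mem_sdiff]
            simp only [Finset.mem_inter] at hxS
            tauto
          have hcard : (S1 ∪ U).card < n := by
            rw [← hS]
            refine Finset.card_lt_card ⟨?_, ?_⟩
            · intro y hy
              simp only [Finset.mem_union, hS1, Finset.mem_sdiff] at hy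
              rcases hy with hy | hy
              · exact hy.1
              · exact (Finset.mem_inter.mp (hU' hy)).1
            · intro h
              exact hxn (h (Finset.mem_inter.mp hxS).1)
          have h2 := ih _ hcard (S1 ∪ U) rfl x hxn
          rw [Finset.union_insert, Finset.card_insert_of_notMem hx, pow_succ]
          nlinarith
      have h3 := chain (S ∩ N) (Finset.Subset.refl _)
      have hun : S1 ∪ (S ∩ N) = S := by rw [hS1]; exact Finset.sdiff_union_inter S N
      rw [hun] at h3
      have hcardD : (S ∩ N).card ≤ D := (Finset.card_le_card Finset.inter_subset_right).trans (hD i)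
      have hpow : (1 : ℝ) / 2 ≤ (1 - 2 * p) ^ (S ∩ N).card := by
        have b1 : (1 - 2 * p) ^ D ≤ (1 - 2 * p) ^ (S ∩ N).card :=
          pow_le_pow_of_le_one (by linarith) (by linarith) hcardD
        have b2 := one_add_mul_le_pow (a := -(2 * p)) (by linarith) D
        have : (1 + -(2 * p)) = 1 - 2 * p := by ring
        rw [this] at b2
        nlinarith
      have h4 : a S1 ≤ 2 * a S := by
        have := ha0 S1
        nlinarith
      have hdepA : DepOn (A S1) (S1.biUnion scope) := by
        intro φ φ' h
        refine Finset.prod_congr rfl (fun j hj => ?_)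
        rw [hdep j φ φ' (fun v hv => h v (Finset.mem_biUnion.mpr ⟨j, hj, hv⟩))]
      have hdepI : DepOn (fun φ => ind (B i φ)) (scope i) := by
        intro φ φ' h
        simp only [hdep i φ φ' h]
      have hdisj : Disjoint (scope i) (S1.biUnion scope) := by
        rw [Finset.disjoint_biUnion_right]
        intro j hj
        simp only [hS1, Finset.mem_sdiff, hN, Finset.mem_filter, Finset.mem_univ, true_and,
          not_not] at hj
        exact hj.2
      have h5 : Ex (fun φ => ind (B i φ) * A S φ) ≤ p * (2 * a S) := by
        calc Ex (fun φ => ind (B i φ) * A S φ) ≤ Ex (fun φ => ind (B i φ) * A S1 φ) := by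
              apply Ex_mono; intro φ
              exact mul_le_mul_of_nonneg_left (hAmono _ _ _ Finset.sdiff_subset) (ind_nonneg _)
          _ = Ex (fun φ => ind (B i φ)) * a S1 := Ex_mul _ _ _ _ hdisj hdepI hdepA
          _ ≤ p * (2 * a S) := mul_le_mul (hp i) h4 (ha0 _) hp0
      rw [hins S i hi]; linarith
  have hpos : ∀ S, 0 < a S := by
    intro S
    induction S using Finset.induction_on with
    | empty => simp only [a, A, Finset.prod_empty]; rw [Ex_one]; norm_num
    | insert i S hi ih =>
      have := key _ S rfl i hi
      nlinarith
  by_contra hcon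
  push Not at hcon
  have : a univ ≤ Ex (fun _ : V → C => (0 : ℝ)) := by
    apply Ex_mono
    intro φ
    obtain ⟨i, hi⟩ := hcon φ
    apply le_of_eq
    exact Finset.prod_eq_zero (Finset.mem_univ i) (by rw [ind_true hi]; ring)
  have h0 : Ex (fun _ : V → C => (0 : ℝ)) = 0 := by simp [Ex]
  have := hpos univ
  linarith
end Prob
end GQ8

set_option linter.unusedSectionVars false
set_option linter.unusedVariables false
namespace GQ8
open Finset

theorem prod_max_ge {ι : Type*} [DecidableEq ι] (S : Finset ι) (a b : ι → ℝ) (ha : ∀ i, 0 ≤ a i)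
    (hb : ∀ i, 0 ≤ b i) :
    ∏ i ∈ S, a i - ∑ z ∈ S, b z * ∏ i ∈ S.erase z, a i ≤ ∏ i ∈ S, max 0 (a i - b i) := by
  induction S using Finset.induction_on with
  | empty => simp
  | insert x S hx ih =>
    rw [Finset.prod_insert hx, Finset.prod_insert hx, Finset.sum_insert hx, Finset.erase_insert hx]
    have h1 : ∑ z ∈ S, b z * ∏ i ∈ (insert x S).erase z, a i
        = a x * ∑ z ∈ S, b z * ∏ i ∈ S.erase z, a i := by
      rw [Finset.mul_sum]
      refine Finset.sum_congr rfl (fun z hz => ?_)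
      have hne : x ≠ z := by rintro rfl; exact hx hz
      rw [Finset.erase_insert_of_ne hne, Finset.prod_insert (by simp [hx])]
      ring
    rw [h1]
    set P := ∏ i ∈ S, max 0 (a i - b i)
    have hP0 : 0 ≤ P := Finset.prod_nonneg (fun i _ => le_max_left _ _)
    have hPA : P ≤ ∏ i ∈ S, a i := Finset.prod_le_prod (fun i _ => le_max_left _ _) (fun i _ => by
      apply max_le (ha i); linarith [hb i])
    have h2 : (a x - b x) * P ≤ max 0 (a x - b x) * P :=
      mul_le_mul_of_nonneg_right (le_max_right _ _) hP0
    have h3 := mul_le_mul_of_nonneg_left ih (ha x)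
    have h4 := mul_le_mul_of_nonneg_left hPA (hb x)
    nlinarith

section S2
variable {V C : Type*} [Fintype V] [DecidableEq V] [Fintype C] [DecidableEq C]

noncomputable def tt (L : V → V → C → ℝ) (S : Finset V) (k : V → C) (z : V) : ℝ :=
  ∑ z' ∈ S.erase z, ind (k z' = k z) * L z z' (k z)

noncomputable def fac (L : V → V → C → ℝ) (Lst : V → Finset C) (Θ : ℝ) (S : Finset V) (k : V → C)
    (z : V) : ℝ := ind (k z ∈ Lst z) * max 0 (1 - tt L S k z / Θ)

noncomputable def ww (L : V → V → C → ℝ) (Lst : V → Finset C) (Θ : ℝ) (S : Finset V) (k : V → C) :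
    ℝ := ∏ z ∈ S, fac L Lst Θ S k z

variable (L : V → V → C → ℝ) (Lst : V → Finset C) (Θ : ℝ)

theorem tt_nonneg (hL0 : ∀ x y c, 0 ≤ L x y c) (S k z) : 0 ≤ tt L S k z :=
  Finset.sum_nonneg (fun _ _ => mul_nonneg (ind_nonneg _) (hL0 _ _ _))

theorem tt_mono (hL0 : ∀ x y c, 0 ≤ L x y c) {S T : Finset V} (h : S ⊆ T) (k z) :
    tt L S k z ≤ tt L T k z :=
  Finset.sum_le_sum_of_subset_of_nonneg (Finset.erase_subset_erase _ h)
    (fun _ _ _ => mul_nonneg (ind_nonneg _) (hL0 _ _ _))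

theorem fac_nonneg (S k z) : 0 ≤ fac L Lst Θ S k z :=
  mul_nonneg (ind_nonneg _) (le_max_left _ _)

theorem fac_anti (hΘ : 0 < Θ) (hL0 : ∀ x y c, 0 ≤ L x y c) {S T : Finset V} (h : S ⊆ T) (k z) :
    fac L Lst Θ T k z ≤ fac L Lst Θ S k z := by
  unfold fac
  refine mul_le_mul_of_nonneg_left ?_ (ind_nonneg _)
  have := tt_mono L hL0 h k z
  gcongr

theorem fac_le_one (hΘ : 0 < Θ) (hL0 : ∀ x y c, 0 ≤ L x y c) (S k z) :
    fac L Lst Θ S k z ≤ 1 := by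
  unfold fac
  have h1 := tt_nonneg L hL0 S k z
  have h2 : 0 ≤ tt L S k z / Θ := by positivity
  have h3 : max 0 (1 - tt L S k z / Θ) ≤ 1 := max_le (by norm_num) (by linarith)
  exact mul_le_one₀ (ind_le_one _) (le_max_left _ _) h3

theorem ww_nonneg (S k) : 0 ≤ ww L Lst Θ S k :=
  Finset.prod_nonneg (fun _ _ => fac_nonneg L Lst Θ _ _ _)

theorem ww_dep (S : Finset V) : DepOn (ww L Lst Θ S) S := by
  intro φ φ' h
  refine Finset.prod_congr rfl (fun z hz => ?_)
  unfold fac tt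
  rw [h z hz]
  congr 4
  refine Finset.sum_congr rfl (fun y hy => ?_)
  rw [h y (Finset.mem_of_mem_erase hy)]

theorem ww_insert (hΘ : 0 < Θ) (hL0 : ∀ x y c, 0 ≤ L x y c)
    (hsym : ∀ x y c, L x y c = L y x c) (S : Finset V) (x : V) (hx : x ∉ S) (k : V → C) :
    ind (k x ∈ Lst x) * ww L Lst Θ S k
      - 2 * ∑ z ∈ S, (ind (k x = k z) * L z x (k z) / Θ) * ww L Lst Θ (S.erase z) k
      ≤ ww L Lst Θ (insert x S) k := by
  let bz : V → ℝ := fun z => ind (k x = k z) * L z x (k z) / Θ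
  have hbz : ∀ z, 0 ≤ bz z := fun z => div_nonneg (mul_nonneg (ind_nonneg _) (hL0 _ _ _)) hΘ.le
  let a : V → ℝ := fun z => if z = x then ind (k x ∈ Lst x) else fac L Lst Θ S k z
  let b : V → ℝ := fun z => if z = x then ∑ z ∈ S, bz z else bz z
  have ha : ∀ i, 0 ≤ a i := by
    intro i; simp only [a]; split_ifs
    · exact ind_nonneg _
    · exact fac_nonneg _ _ _ _ _ _
  have hb : ∀ i, 0 ≤ b i := by
    intro i; simp only [b]; split_ifs
    · exact Finset.sum_nonneg (fun z _ => hbz z)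
    · exact hbz i
  have hax : a x = ind (k x ∈ Lst x) := by simp [a]
  have hbx : b x = ∑ z ∈ S, bz z := by simp [b]
  have hne : ∀ z ∈ S, z ≠ x := by rintro z hz rfl; exact hx hz
  have haz : ∀ z ∈ S, a z = fac L Lst Θ S k z := fun z hz => by simp [a, hne z hz]
  have hbz' : ∀ z ∈ S, b z = bz z := fun z hz => by simp [b, hne z hz]
  have aux : ∀ (P : Prop) (t t' : ℝ), 0 ≤ t' →
      max 0 (ind P * max 0 (1 - t) - t') ≤ ind P * max 0 (1 - (t + t')) := by
    intro P t t' ht'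
    by_cases hP : P
    · rw [ind_true hP, one_mul, one_mul]
      refine max_le (le_max_left _ _) ?_
      rcases le_total 0 (1 - t) with h | h
      · rw [max_eq_right h]
        refine le_trans ?_ (le_max_right _ _); linarith
      · rw [max_eq_left h]
        refine le_trans ?_ (le_max_left _ _); linarith
    · rw [ind_false hP, zero_mul, zero_mul]
      exact max_le le_rfl (by linarith)
  have hfac : ∀ z ∈ insert x S, max 0 (a z - b z) ≤ fac L Lst Θ (insert x S) k z := by
    intro z hz
    rcases Finset.mem_insert.mp hz with rfl | hz
    · rw [hax, hbx]
      have := aux (k z ∈ Lst z) 0 (∑ z ∈ S, bz z) (Finset.sum_nonneg (fun z _ => hbz z))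
      simp only [sub_zero, zero_add] at this
      rw [max_eq_right (zero_le_one), mul_one] at this
      refine this.trans (le_of_eq ?_)
      unfold fac
      congr 3
      unfold tt
      rw [Finset.erase_insert hx, Finset.sum_div]
      refine Finset.sum_congr rfl (fun y hy => ?_)
      simp only [bz]
      by_cases h : k y = k z
      · rw [h, hsym]
      · rw [ind_false h, ind_false (fun h' => h h'.symm)]; simp
    · rw [haz z hz, hbz' z hz]
      refine (aux (k z ∈ Lst z) (tt L S k z / Θ) (bz z) (hbz z)).trans (le_of_eq ?_)
      unfold fac
      congr 3
      unfold tt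
      rw [Finset.erase_insert_of_ne (hne z hz).symm, Finset.sum_insert (by simp [hx]), add_div,
        add_comm]
  have h1 := prod_max_ge (insert x S) a b ha hb
  have h2 : ∏ i ∈ insert x S, max 0 (a i - b i) ≤ ww L Lst Θ (insert x S) k :=
    Finset.prod_le_prod (fun _ _ => le_max_left _ _) hfac
  have hAS : ∏ i ∈ S, a i = ww L Lst Θ S k := Finset.prod_congr rfl haz
  rw [Finset.prod_insert hx, Finset.sum_insert hx, Finset.erase_insert hx, hax, hbx, hAS] at h1
  have hE : ∀ z ∈ S, ∏ i ∈ S.erase z, a i ≤ ww L Lst Θ (S.erase z) k := by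
    intro z hz
    refine Finset.prod_le_prod (fun i _ => ha i) (fun i hi => ?_)
    rw [haz i (Finset.mem_of_mem_erase hi)]
    exact fac_anti L Lst Θ hΘ hL0 (Finset.erase_subset _ _) _ _
  have hW : ∀ z ∈ S, ww L Lst Θ S k ≤ ww L Lst Θ (S.erase z) k := by
    intro z hz
    rw [← hAS, ← Finset.mul_prod_erase S a hz]
    have := fac_le_one L Lst Θ hΘ hL0 S k z
    rw [← haz z hz] at this
    calc _ ≤ 1 * ∏ i ∈ S.erase z, a i :=
          mul_le_mul_of_nonneg_right this (Finset.prod_nonneg (fun i _ => ha i))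
      _ ≤ _ := by rw [one_mul]; exact hE z hz
  have h3 : ∑ z ∈ S, b z * ∏ i ∈ (insert x S).erase z, a i
      ≤ ∑ z ∈ S, bz z * ww L Lst Θ (S.erase z) k := by
    refine Finset.sum_le_sum (fun z hz => ?_)
    rw [hbz' z hz, Finset.erase_insert_of_ne (hne z hz).symm, Finset.prod_insert (by simp [hx]), hax]
    refine mul_le_mul_of_nonneg_left ?_ (hbz z)
    have e1 := hE z hz
    have e2 := ind_le_one (k x ∈ Lst x)
    have e3 := ind_nonneg (k x ∈ Lst x)
    have e4 : 0 ≤ ∏ i ∈ S.erase z, a i := Finset.prod_nonneg (fun i _ => ha i)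
    nlinarith
  have h4 : (∑ z ∈ S, bz z) * ww L Lst Θ S k ≤ ∑ z ∈ S, bz z * ww L Lst Θ (S.erase z) k := by
    rw [Finset.sum_mul]
    exact Finset.sum_le_sum (fun z hz => mul_le_mul_of_nonneg_left (hW z hz) (hbz z))
  have h5 : ∑ z ∈ S, (ind (k x = k z) * L z x (k z) / Θ) * ww L Lst Θ (S.erase z) k
    = ∑ z ∈ S, bz z * ww L Lst Θ (S.erase z) k := rfl
  rw [h5]
  linarith

theorem Ex_bz [Nonempty C] (x z : V) (hxz : x ≠ z) :
    Ex (fun k : V → C => ind (k x = k z) * L z x (k z) / Θ)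
      = (∑ c, L z x c) / (Θ * (Fintype.card C : ℝ) ^ 2) := by
  have h : (fun k : V → C => ind (k x = k z) * L z x (k z) / Θ)
      = fun k => ∑ c, (L z x c / Θ) * (ind (k x = c) * ind (k z = c)) := by
    funext k
    rw [Finset.sum_eq_single (k z)]
    · rw [ind_true (P := k z = k z) rfl]; ring
    · intro c _ hc
      rw [ind_false (P := k z = c) (fun h => hc h.symm)]; ring
    · intro h; exact absurd (Finset.mem_univ _) h
  rw [h, Ex_sum]
  have h2 : ∀ c, Ex (fun k : V → C => (L z x c / Θ) * (ind (k x = c) * ind (k z = c)))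
      = (L z x c) / (Θ * (Fintype.card C : ℝ) ^ 2) := by
    intro c
    rw [Ex_const_mul, Ex_mul _ _ {x} {z} (by simpa using hxz), Ex_single, Ex_single]
    · field_simp
    · intro φ φ' h; simp only [h x (Finset.mem_singleton_self x)]
    · intro φ φ' h; simp only [h z (Finset.mem_singleton_self z)]
  simp only [h2]
  rw [Finset.sum_div]

theorem stage2 [Nonempty C] (Z : Finset V) (hL0 : ∀ x y c, 0 ≤ L x y c)
    (hsym : ∀ x y c, L x y c = L y x c)
    (hLst : ∀ z ∈ Z, (Fintype.card C : ℝ) ≤ 2 * ((Lst z).card : ℝ))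
    (Lam : ℝ) (hΘ : 0 < Θ) (hLam : ∀ x ∈ Z, ∑ z ∈ Z.erase x, ∑ c, L x z c ≤ Lam)
    (hnum : 32 * Lam ≤ (Fintype.card C : ℝ) ^ 2 * Θ) :
    ∃ k : V → C, ∀ z ∈ Z, k z ∈ Lst z ∧
      ∑ z' ∈ Z.erase z, ind (k z' = k z) * L z z' (k z) < Θ := by
  have hN : 0 < (Fintype.card C : ℝ) := by exact_mod_cast Fintype.card_pos
  let W : Finset V → ℝ := fun S => Ex (ww L Lst Θ S)
  have main : ∀ n : ℕ, ∀ S : Finset V, S.card = n → S ⊆ Z →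
      0 < W S ∧ ∀ z ∈ S, W (S.erase z) ≤ 4 * W S := by
    intro n
    induction n with
    | zero =>
      intro S hS _
      rw [Finset.card_eq_zero] at hS
      subst hS
      constructor
      · simp only [W]
        have : ww L Lst Θ (∅ : Finset V) = fun _ => 1 := by funext k; simp [ww]
        rw [this, Ex_one]; norm_num
      · simp
    | succ n ih =>
      intro S hS hSZ
      have hstep : ∀ x ∈ S, 0 < W (S.erase x) ∧ W (S.erase x) ≤ 4 * W S := by
        intro x hxS
        set S' := S.erase x with hS'
        have hx : x ∉ S' := Finset.notMem_erase x S
        have hSS : insert x S' = S := Finset.insert_erase hxS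
        have hS'Z : S' ⊆ Z := (Finset.erase_subset _ _).trans hSZ
        obtain ⟨hpos, hrat⟩ := ih S' (by rw [hS', Finset.card_erase_of_mem hxS, hS]; rfl) hS'Z
        refine ⟨hpos, ?_⟩
        have h1 : Ex (fun k => ind (k x ∈ Lst x) * ww L Lst Θ S' k
            - 2 * ∑ z ∈ S', (ind (k x = k z) * L z x (k z) / Θ) * ww L Lst Θ (S'.erase z) k)
            ≤ W S := by
          simp only [W]
          rw [← hSS]
          exact Ex_mono (fun k => ww_insert L Lst Θ hΘ hL0 hsym S' x hx k)
        rw [Ex_sub, Ex_const_mul, Ex_sum] at h1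
        have h2 : Ex (fun k => ind (k x ∈ Lst x) * ww L Lst Θ S' k)
            = ((Lst x).card / (Fintype.card C : ℝ)) * W S' := by
          rw [Ex_mul _ _ {x} S' (by simpa using hx) _ (ww_dep L Lst Θ S'), Ex_mem]
          intro φ φ' h; simp only [h x (Finset.mem_singleton_self x)]
        have h3 : ∀ z ∈ S', Ex (fun k => (ind (k x = k z) * L z x (k z) / Θ)
              * ww L Lst Θ (S'.erase z) k)
            ≤ (∑ c, L x z c) / (Θ * (Fintype.card C : ℝ) ^ 2) * (4 * W S') := by
          intro z hz
          have hxz : x ≠ z := by rintro rfl; exact hx hz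
          rw [Ex_mul _ _ {x, z} (S'.erase z) _ _ (ww_dep L Lst Θ _), Ex_bz L Θ x z hxz]
          · simp only [hsym z x]
            refine mul_le_mul_of_nonneg_left (hrat z hz) ?_
            exact div_nonneg (Finset.sum_nonneg (fun c _ => hL0 _ _ _)) (by positivity)
          · rw [Finset.disjoint_left]
            intro y hy
            simp only [Finset.mem_insert, Finset.mem_singleton] at hy
            rcases hy with rfl | rfl
            · simp [hx]
            · simp
          · intro φ φ' h
            simp only [h x (by simp), h z (by simp)]
        have h4 := Finset.sum_le_sum h3
        rw [← Finset.sum_mul, ← Finset.sum_div] at h4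
        have h5 : ∑ z ∈ S', ∑ c, L x z c ≤ Lam := by
          refine le_trans ?_ (hLam x (hSZ hxS))
          refine Finset.sum_le_sum_of_subset_of_nonneg ?_
            (fun _ _ _ => Finset.sum_nonneg (fun c _ => hL0 _ _ _))
          exact Finset.erase_subset_erase _ hSZ
        have h6 : (1 : ℝ) / 2 ≤ (Lst x).card / (Fintype.card C : ℝ) := by
          rw [le_div_iff₀ hN]; linarith [hLst x (hSZ hxS)]
        have h7 : (∑ z ∈ S', ∑ c, L x z c) / (Θ * (Fintype.card C : ℝ) ^ 2) ≤ 1 / 32 := by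
          rw [div_le_iff₀ (by positivity)]; linarith
        rw [h2] at h1
        have h8 := mul_le_mul_of_nonneg_right h6 hpos.le
        have h9 := mul_le_mul_of_nonneg_right h7 (by positivity : (0 : ℝ) ≤ 4 * W S')
        linarith
      obtain ⟨x, hxS⟩ : S.Nonempty := by rw [← Finset.card_pos]; omega
      have := hstep x hxS
      exact ⟨by linarith, fun z hz => (hstep z hz).2⟩
  have hpos := (main _ Z rfl (Finset.Subset.refl _)).1
  by_contra hcon
  push Not at hcon
  have : W Z ≤ Ex (fun _ : V → C => (0 : ℝ)) := by
    apply Ex_mono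
    intro k
    obtain ⟨z, hz, hk⟩ := hcon k
    apply le_of_eq
    refine Finset.prod_eq_zero hz ?_
    unfold fac
    by_cases h : k z ∈ Lst z
    · have h1 := hk h
      have h2 : 1 ≤ tt L Z k z / Θ := by rw [le_div_iff₀ hΘ, one_mul]; exact h1
      rw [max_eq_left (by linarith), mul_zero]
    · rw [ind_false h, zero_mul]
  have h0 : Ex (fun _ : V → C => (0 : ℝ)) = 0 := by simp [Ex]
  linarith
end S2
end GQ8

set_option linter.unusedSectionVars false
set_option linter.unusedVariables false
namespace GQ8
open Finset

section S3
variable {V C : Type*} [Fintype V] [DecidableEq V] [Fintype C] [DecidableEq C]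

theorem Ex_avoid [Nonempty C] (U : Finset V) (B : Finset C) :
    Ex (fun φ : V → C => ind (∀ u ∈ U, φ u ∉ B))
      ≤ Real.exp (-((B.card : ℝ) * U.card / (Fintype.card C : ℝ))) := by
  have hc : (0 : ℝ) < (Fintype.card C : ℝ) := by exact_mod_cast Fintype.card_pos
  have h1 : ∀ φ : V → C, ind (∀ u ∈ U, φ u ∉ B) ≤ ∏ y, (if y ∈ U then 1 - ind (φ y ∈ B) else 1) := by
    intro φ
    by_cases h : ∀ u ∈ U, φ u ∉ B
    · rw [ind_true h, Finset.prod_eq_one]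
      intro y _
      split_ifs with hy
      · rw [ind_false (h y hy)]; ring
      · rfl
    · rw [ind_false h]
      refine Finset.prod_nonneg (fun y _ => ?_)
      split_ifs
      · linarith [ind_le_one (φ y ∈ B)]
      · norm_num
  refine (Ex_mono h1).trans ?_
  rw [Ex_prod (fun y c => if y ∈ U then 1 - ind (c ∈ B) else 1)]
  have hs : ∑ c : C, ind (c ∈ B) = B.card := by
    have : ∀ c : C, ind (c ∈ B) = if c ∈ B then 1 else 0 := by
      intro c; by_cases h : c ∈ B
      · rw [ind_true h, if_pos h]
      · rw [ind_false h, if_neg h]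
    simp [this]
  have h2 : ∀ y : V, (∑ c : C, if y ∈ U then 1 - ind (c ∈ B) else 1) / (Fintype.card C : ℝ)
      ≤ if y ∈ U then Real.exp (-((B.card : ℝ) / (Fintype.card C : ℝ))) else 1 := by
    intro y
    by_cases hy : y ∈ U
    · simp only [hy, if_true]
      rw [Finset.sum_sub_distrib, hs]
      have := Real.add_one_le_exp (-((B.card : ℝ) / (Fintype.card C : ℝ)))
      refine le_trans (le_of_eq ?_) this
      simp only [sum_const, card_univ, nsmul_eq_mul, mul_one]
      field_simp
      ring
    · simp [hy, hc.ne']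
  refine (Finset.prod_le_prod (fun y _ => ?_) (fun y _ => h2 y)).trans (le_of_eq ?_)
  · refine div_nonneg (Finset.sum_nonneg (fun c _ => ?_)) hc.le
    split_ifs
    · linarith [ind_le_one (c ∈ B)]
    · norm_num
  · rw [Finset.prod_ite_mem, Finset.univ_inter, Finset.prod_const, ← Real.exp_nat_mul]
    congr 1; ring

/-- prescribed colours on `U`, bounded weights elsewhere -/
theorem Ex_agree_mul [Nonempty C] (U : Finset V) (φ0 : V → C) (h : V → C → ℝ) (β : V → ℝ)
    (hβ0 : ∀ y, 0 ≤ β y)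
    (h0 : ∀ y c, 0 ≤ h y c) (hβ : ∀ y, (∑ c, h y c) / (Fintype.card C : ℝ) ≤ Real.exp (β y)) :
    Ex (fun φ : V → C => ∏ y, (if y ∈ U then ind (φ y = φ0 y) else h y (φ y)))
      ≤ (1 / (Fintype.card C : ℝ)) ^ U.card * Real.exp (∑ y, β y) := by
  have hc : (0 : ℝ) < (Fintype.card C : ℝ) := by exact_mod_cast Fintype.card_pos
  rw [Ex_prod (fun y c => if y ∈ U then ind (c = φ0 y) else h y c)]
  have h2 : ∀ y : V, (∑ c : C, if y ∈ U then ind (c = φ0 y) else h y c) / (Fintype.card C : ℝ)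
      ≤ (if y ∈ U then (1 / (Fintype.card C : ℝ)) else 1) * Real.exp (β y) := by
    intro y
    by_cases hy : y ∈ U
    · simp only [hy, if_true]
      rw [sum_ind_eq, ind_true (Finset.mem_univ _)]
      have : 1 ≤ Real.exp (β y) := Real.one_le_exp (hβ0 y)
      have h3 : 0 ≤ 1 / (Fintype.card C : ℝ) := by positivity
      nlinarith
    · simp only [hy, if_false, one_mul]; exact hβ y
  refine (Finset.prod_le_prod (fun y _ => ?_) (fun y _ => h2 y)).trans (le_of_eq ?_)
  · refine div_nonneg (Finset.sum_nonneg (fun c _ => ?_)) hc.le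
    split_ifs
    · exact ind_nonneg _
    · exact h0 _ _
  · rw [Finset.prod_mul_distrib, Finset.prod_ite_mem, Finset.univ_inter, Finset.prod_const,
      Real.exp_sum]

theorem Ex_agree [Nonempty C] (U : Finset V) (φ0 : V → C) :
    Ex (fun φ : V → C => ind (∀ u ∈ U, φ u = φ0 u)) ≤ (1 / (Fintype.card C : ℝ)) ^ U.card := by
  have hc : (0 : ℝ) < (Fintype.card C : ℝ) := by exact_mod_cast Fintype.card_pos
  have := Ex_agree_mul U φ0 (fun _ _ => 1) (fun _ => 0) (fun _ => le_rfl) (fun _ _ => zero_le_one)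
    (fun y => by simp [hc.ne'])
  simp only [Finset.sum_const_zero, Real.exp_zero, mul_one] at this
  refine le_trans (Ex_mono (fun φ => ?_)) this
  by_cases h : ∀ u ∈ U, φ u = φ0 u
  · rw [ind_true h, Finset.prod_eq_one]
    intro y _
    split_ifs with hy
    · exact ind_true (h y hy)
    · rfl
  · rw [ind_false h]
    refine Finset.prod_nonneg (fun y _ => ?_)
    split_ifs
    · exact ind_nonneg _
    · norm_num

variable (nb : V → Finset V)

def ball : ℕ → V → Finset V
  | 0, v => {v}
  | n + 1, v => ball n v ∪ (ball n v).biUnion nb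

theorem ball_card {d : ℕ} (hd : ∀ v, (nb v).card ≤ d) (n : ℕ) (v : V) :
    (ball nb n v).card ≤ (d + 1) ^ n := by
  induction n with
  | zero => simp [ball]
  | succ n ih =>
    rw [ball]
    refine (Finset.card_union_le _ _).trans ?_
    have := Finset.card_biUnion_le_card_mul (ball nb n v) nb d (fun u _ => hd u)
    rw [pow_succ]
    nlinarith

theorem ball_subset_succ (n : ℕ) (v : V) : ball nb n v ⊆ ball nb (n + 1) v := by
  rw [ball]; exact Finset.subset_union_left

theorem ball_step {n : ℕ} {v w u : V} (h : w ∈ ball nb n v) (hu : u ∈ nb w) :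
    u ∈ ball nb (n + 1) v := by
  rw [ball]; exact Finset.mem_union_right _ (Finset.mem_biUnion.mpr ⟨w, h, hu⟩)

theorem ball_trans {n m : ℕ} {x y z : V} (h : y ∈ ball nb n x) (h' : z ∈ ball nb m y) :
    z ∈ ball nb (n + m) x := by
  induction m generalizing z with
  | zero => simp only [ball, Finset.mem_singleton] at h'; subst h'; exact h
  | succ m ih =>
    rw [ball, Finset.mem_union, Finset.mem_biUnion] at h'
    rcases h' with h' | ⟨w, hw, hz⟩
    · exact ball_subset_succ nb _ _ (ih h')
    · exact ball_step nb (ih hw) hz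

theorem ball_symm (hsymm : ∀ u v, u ∈ nb v → v ∈ nb u) {n : ℕ} {x y : V} (h : y ∈ ball nb n x) :
    x ∈ ball nb n y := by
  induction n generalizing y with
  | zero => simp only [ball, Finset.mem_singleton] at h ⊢; exact h.symm
  | succ n ih =>
    rw [ball, Finset.mem_union, Finset.mem_biUnion] at h
    rcases h with h | ⟨w, hw, hz⟩
    · exact ball_subset_succ nb _ _ (ih h)
    · have h1 : w ∈ ball nb 1 y := ball_step nb (n := 0) (by simp [ball]) (hsymm _ _ hz)
      rw [add_comm]
      exact ball_trans nb h1 (ih hw)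

open Classical in
noncomputable def FB (φ : V → C) (v : V) (k : C) : Finset V :=
  (nb v).filter (fun u => ∃ w ∈ nb u, w ≠ v ∧ φ w = k)

def fine (φ : V → C) (v : V) (k : C) : Prop := 2 * (FB nb φ v k).card ≤ (nb v).card

def inZ (φ : V → C) (v : V) : Prop := ¬ fine nb φ v (φ v)

variable (A : V → C → Finset C)

open Classical in
noncomputable def YY (φ : V → C) (v : V) (k : C) : Finset V :=
  (nb v).filter (fun u => ¬ inZ nb φ u ∧ φ u ∈ A v k ∧ (∀ u' ∈ nb v, φ u' = φ u → u' = u) ∧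
    u ∉ FB nb φ v k)

theorem FB_dep (v : V) (k : C) : DepOn (fun φ => FB nb φ v k) ((nb v).biUnion nb) := by
  intro φ φ' h
  refine Finset.filter_congr (fun u hu => ?_)
  refine exists_congr (fun w => and_congr_right (fun hw => ?_))
  rw [h w (Finset.mem_biUnion.mpr ⟨u, hu, hw⟩)]

theorem bad_dep (s : ℕ) (v : V) :
    DepOn (fun φ => ∃ k, fine nb φ v k ∧ (YY nb A φ v k).card < s) (ball nb 3 v) := by
  intro φ φ' h
  have m0 : v ∈ ball nb 0 v := by simp [ball]
  have m1 : ∀ u ∈ nb v, u ∈ ball nb 1 v := fun u hu => ball_step nb m0 hu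
  have m2 : ∀ u ∈ nb v, ∀ w ∈ nb u, w ∈ ball nb 2 v := fun u hu w hw => ball_step nb (m1 u hu) hw
  have m3 : ∀ u ∈ nb v, ∀ w ∈ nb u, ∀ y ∈ nb w, y ∈ ball nb 3 v :=
    fun u hu w hw y hy => ball_step nb (m2 u hu w hw) hy
  have e1 : ∀ u ∈ nb v, φ u = φ' u := fun u hu =>
    h u (ball_subset_succ nb _ _ (ball_subset_succ nb _ _ (m1 u hu)))
  have hF : ∀ k, FB nb φ v k = FB nb φ' v k := by
    intro k
    refine FB_dep nb v k φ φ' (fun w hw => ?_)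
    obtain ⟨u, hu, hw⟩ := Finset.mem_biUnion.mp hw
    exact h w (ball_subset_succ nb _ _ (m2 u hu w hw))
  have hZ : ∀ u ∈ nb v, (inZ nb φ u ↔ inZ nb φ' u) := by
    intro u hu
    unfold inZ fine
    have : FB nb φ u (φ u) = FB nb φ' u (φ u) := by
      refine FB_dep nb u _ φ φ' (fun w hw => ?_)
      obtain ⟨x, hx, hw⟩ := Finset.mem_biUnion.mp hw
      exact h w (m3 u hu x hx w hw)
    rw [this, e1 u hu]
  have hY : ∀ k, YY nb A φ v k = YY nb A φ' v k := by
    intro k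
    ext u
    simp only [YY, Finset.mem_filter]
    refine and_congr_right (fun hu => ?_)
    rw [hZ u hu, hF k, e1 u hu]
    have : (∀ u' ∈ nb v, φ u' = φ' u → u' = u) ↔ (∀ u' ∈ nb v, φ' u' = φ' u → u' = u) := by
      refine forall_congr' (fun u' => forall_congr' (fun hu' => ?_))
      rw [e1 u' hu']
    rw [this]
  simp only [fine, hF, hY]

end S3
end GQ8

set_option linter.unusedSectionVars false
set_option linter.unusedVariables false
namespace GQ8
open Finset

section S4
variable {V C : Type*} [Fintype V] [DecidableEq V] [Fintype C] [DecidableEq C]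
variable (nb : V → Finset V)

open Classical in
noncomputable def G1 (φ : V → C) (v : V) (k : C) (B : Finset C) : Finset C :=
  B.filter (fun l => ∃ u ∈ nb v \ FB nb φ v k, φ u = l)
open Classical in
noncomputable def G2 (φ : V → C) (v : V) (B : Finset C) : Finset C :=
  B.filter (fun l => ∃ p ∈ (nb v).offDiag, φ p.1 = l ∧ φ p.2 = l)
open Classical in
noncomputable def G3 (φ : V → C) (v : V) (B : Finset C) : Finset C :=
  B.filter (fun l => ∃ u ∈ nb v, φ u = l ∧ inZ nb φ u)

theorem card_YY (A : V → C → Finset C) (φ : V → C) (v : V) (k : C) :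
    (G1 nb φ v k (A v k)).card ≤
      (YY nb A φ v k).card + ((G2 nb φ v (A v k)).card + (G3 nb φ v (A v k)).card) := by
  classical
  have h : G1 nb φ v k (A v k) ⊆
      (YY nb A φ v k).image φ ∪ (G2 nb φ v (A v k) ∪ G3 nb φ v (A v k)) := by
    intro l hl
    simp only [G1, Finset.mem_filter, Finset.mem_sdiff] at hl
    obtain ⟨hlA, u, ⟨hu, huF⟩, rfl⟩ := hl
    by_cases h2 : φ u ∈ G2 nb φ v (A v k)
    · simp [h2]
    by_cases h3 : φ u ∈ G3 nb φ v (A v k)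
    · simp [h3]
    refine Finset.mem_union_left _ (Finset.mem_image_of_mem _ ?_)
    simp only [YY, Finset.mem_filter]
    refine ⟨hu, ?_, hlA, ?_, huF⟩
    · intro hz
      exact h3 (by simp only [G3, Finset.mem_filter]; exact ⟨hlA, u, hu, rfl, hz⟩)
    · intro u' hu' he
      by_contra hne
      refine h2 ?_
      simp only [G2, Finset.mem_filter]
      exact ⟨hlA, (u', u), Finset.mem_offDiag.mpr ⟨hu', hu, hne⟩, he, rfl⟩
  refine (Finset.card_le_card h).trans ((Finset.card_union_le _ _).trans ?_)
  have := Finset.card_image_le (s := YY nb A φ v k) (f := φ)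
  have := Finset.card_union_le (G2 nb φ v (A v k)) (G3 nb φ v (A v k))
  omega

theorem E1_bound [Nonempty C] (side : V → Bool) (hside : ∀ u v, u ∈ nb v → side u ≠ side v)
    (d r : ℕ) (hd2 : ∀ v, d ≤ 2 * (nb v).card) (v : V) (k : C) (B : Finset C) (hr : r ≤ B.card) :
    Ex (fun φ : V → C => ind (fine nb φ v k ∧ (G1 nb φ v k B).card < r))
      ≤ (B.card.choose r : ℝ) *
        Real.exp (-(((B.card : ℝ) - r) * d / (4 * (Fintype.card C : ℝ)))) := by
  classical
  have hc : (0 : ℝ) < (Fintype.card C : ℝ) := by exact_mod_cast Fintype.card_pos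
  set bd := Real.exp (-(((B.card : ℝ) - r) * d / (4 * (Fintype.card C : ℝ)))) with hbd
  have h1 : ∀ φ : V → C, ind (fine nb φ v k ∧ (G1 nb φ v k B).card < r) ≤
      ∑ M ∈ (nb v).powerset.filter (fun M => 2 * M.card ≤ (nb v).card),
        ∑ Λ ∈ B.powersetCard r,
          ind (FB nb φ v k = M) * ind (∀ u ∈ nb v \ M, φ u ∉ B \ Λ) := by
    intro φ
    by_cases h : fine nb φ v k ∧ (G1 nb φ v k B).card < r
    · rw [ind_true h]
      obtain ⟨hf, hG⟩ := h
      obtain ⟨Λ, hΛ1, hΛ2, hΛ3⟩ := Finset.exists_subsuperset_card_eq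
        (s := G1 nb φ v k B) (t := B) (n := r) (Finset.filter_subset _ _) hG.le hr
      have hM : FB nb φ v k ∈ (nb v).powerset.filter (fun M => 2 * M.card ≤ (nb v).card) := by
        rw [Finset.mem_filter, Finset.mem_powerset]
        exact ⟨Finset.filter_subset _ _, hf⟩
      have hΛ : Λ ∈ B.powersetCard r := Finset.mem_powersetCard.mpr ⟨hΛ2, hΛ3⟩
      have hone : (1 : ℝ) = ind (FB nb φ v k = FB nb φ v k) *
          ind (∀ u ∈ nb v \ FB nb φ v k, φ u ∉ B \ Λ) := by
        rw [ind_true rfl, ind_true, one_mul]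
        intro u hu hB
        rw [Finset.mem_sdiff] at hB
        refine hB.2 (hΛ1 ?_)
        simp only [G1, Finset.mem_filter]
        exact ⟨hB.1, u, hu, rfl⟩
      rw [hone]
      refine le_trans ?_ (Finset.single_le_sum (f := fun M => ∑ Λ ∈ B.powersetCard r,
          ind (FB nb φ v k = M) * ind (∀ u ∈ nb v \ M, φ u ∉ B \ Λ))
          (fun M _ => Finset.sum_nonneg (fun Λ _ => mul_nonneg (ind_nonneg _) (ind_nonneg _))) hM)
      exact Finset.single_le_sum (f := fun Λ => 
          ind (FB nb φ v k = FB nb φ v k) * ind (∀ u ∈ nb v \ FB nb φ v k, φ u ∉ B \ Λ))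
          (fun Λ _ => mul_nonneg (ind_nonneg _) (ind_nonneg _)) hΛ
    · rw [ind_false h]
      exact Finset.sum_nonneg (fun M _ => Finset.sum_nonneg
        (fun Λ _ => mul_nonneg (ind_nonneg _) (ind_nonneg _)))
  refine (Ex_mono h1).trans ?_
  rw [Ex_sum]
  have hdisj : Disjoint ((nb v).biUnion nb) (nb v) := by
    rw [Finset.disjoint_left]
    intro w hw hwv
    obtain ⟨u, hu, hw⟩ := Finset.mem_biUnion.mp hw
    have a1 := hside u v hu
    have a2 := hside w u hw
    have a3 := hside w v hwv
    revert a1 a2 a3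
    cases side u <;> cases side v <;> cases side w <;> simp
  have h2 : ∀ M ∈ (nb v).powerset.filter (fun M => 2 * M.card ≤ (nb v).card),
      Ex (fun φ : V → C => ∑ Λ ∈ B.powersetCard r,
        ind (FB nb φ v k = M) * ind (∀ u ∈ nb v \ M, φ u ∉ B \ Λ))
      ≤ Ex (fun φ : V → C => ind (FB nb φ v k = M)) * ((B.card.choose r : ℝ) * bd) := by
    intro M hM
    rw [Finset.mem_filter, Finset.mem_powerset] at hM
    rw [Ex_sum, ← Finset.card_powersetCard, ← nsmul_eq_mul, mul_smul_comm, ← Finset.sum_const]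
    refine Finset.sum_le_sum (fun Λ hΛ => ?_)
    rw [Finset.mem_powersetCard] at hΛ
    rw [Ex_mul _ _ ((nb v).biUnion nb) (nb v) hdisj]
    · refine mul_le_mul_of_nonneg_left ?_ (Ex_nonneg (fun _ => ind_nonneg _))
      refine (Ex_avoid _ _).trans ?_
      rw [hbd]
      apply Real.exp_le_exp.mpr
      rw [neg_le_neg_iff, Finset.card_sdiff_of_subset hΛ.1, hΛ.2, Nat.cast_sub hr,
        Finset.card_sdiff_of_subset hM.1, Nat.cast_sub (Finset.card_le_card hM.1)]
      rw [div_le_div_iff₀ (by positivity) hc]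
      have e1 : (d : ℝ) ≤ 2 * (nb v).card := by exact_mod_cast hd2 v
      have e2 : 2 * (M.card : ℝ) ≤ (nb v).card := by exact_mod_cast hM.2
      have e3 : (r : ℝ) ≤ B.card := by exact_mod_cast hr
      have e4 : (d : ℝ) ≤ 4 * ((nb v).card - M.card) := by linarith
      have e5 := mul_le_mul_of_nonneg_left e4 (sub_nonneg.mpr e3)
      nlinarith
    · intro φ φ' h
      simp only [FB_dep nb v k φ φ' h]
    · intro φ φ' h
      have : (∀ u ∈ nb v \ M, φ u ∉ B \ Λ) ↔ (∀ u ∈ nb v \ M, φ' u ∉ B \ Λ) := by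
        refine forall_congr' (fun u => forall_congr' (fun hu => ?_))
        rw [h u (Finset.mem_sdiff.mp hu).1]
      simp only [this]
  refine (Finset.sum_le_sum h2).trans ?_
  rw [← Finset.sum_mul, ← Ex_sum]
  have h3 : Ex (fun φ : V → C => ∑ M ∈ (nb v).powerset.filter (fun M => 2 * M.card ≤ (nb v).card),
      ind (FB nb φ v k = M)) ≤ 1 := by
    refine le_trans (Ex_mono (g := fun _ => 1) (fun φ => ?_)) (le_of_eq Ex_one)
    have : ∀ M, ind (FB nb φ v k = M) = ind (M = FB nb φ v k) :=
      fun M => congrArg ind (propext eq_comm)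
    simp only [this]
    rw [sum_ind_eq]
    exact ind_le_one _
  have h4 : 0 ≤ (B.card.choose r : ℝ) * bd := by positivity
  nlinarith

theorem E2_bound [Nonempty C] (d s : ℕ) (hd1 : ∀ v, (nb v).card ≤ d) (v : V) (B : Finset C) :
    Ex (fun φ : V → C => ind (s ≤ (G2 nb φ v B).card))
      ≤ (B.card.choose s : ℝ) * ((d : ℝ) / (Fintype.card C : ℝ)) ^ (2 * s) := by
  classical
  have hc : (0 : ℝ) < (Fintype.card C : ℝ) := by exact_mod_cast Fintype.card_pos
  have h1 : ∀ φ : V → C, ind (s ≤ (G2 nb φ v B).card) ≤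
      ∑ Λ ∈ B.powersetCard s, ∑ g ∈ Fintype.piFinset (fun _ : Λ => (nb v).offDiag),
        ind (∀ l : Λ, φ (g l).1 = l ∧ φ (g l).2 = l) := by
    intro φ
    by_cases h : s ≤ (G2 nb φ v B).card
    · rw [ind_true h]
      obtain ⟨Λ, hΛ1, hΛ2⟩ := Finset.exists_subset_card_eq h
      have hΛ : Λ ∈ B.powersetCard s :=
        Finset.mem_powersetCard.mpr ⟨hΛ1.trans (Finset.filter_subset _ _), hΛ2⟩
      have hex : ∀ l : Λ, ∃ p ∈ (nb v).offDiag, φ p.1 = l ∧ φ p.2 = l := by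
        intro l
        have := hΛ1 l.2
        simp only [G2, Finset.mem_filter] at this
        exact this.2
      choose g hg1 hg2 using hex
      rw [← ind_true hg2]
      refine le_trans ?_ (Finset.single_le_sum (f := fun Λ : Finset C =>
        ∑ g ∈ Fintype.piFinset (fun _ : Λ => (nb v).offDiag),
        ind (∀ l : Λ, φ (g l).1 = l ∧ φ (g l).2 = l))
        (fun M _ => Finset.sum_nonneg (fun Λ _ => ind_nonneg _)) hΛ)
      exact Finset.single_le_sum (f := fun g : Λ → V × V =>
        ind (∀ l : Λ, φ (g l).1 = l ∧ φ (g l).2 = l)) (fun _ _ => ind_nonneg _)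
        (Fintype.mem_piFinset.mpr hg1)
    · rw [ind_false h]
      exact Finset.sum_nonneg (fun M _ => Finset.sum_nonneg (fun Λ _ => ind_nonneg _))
  refine (Ex_mono h1).trans ?_
  rw [Ex_sum, ← Finset.card_powersetCard, ← nsmul_eq_mul, ← Finset.sum_const]
  refine Finset.sum_le_sum (fun Λ hΛ => ?_)
  rw [Finset.mem_powersetCard] at hΛ
  rw [Ex_sum]
  have h2 : ∀ g ∈ Fintype.piFinset (fun _ : Λ => (nb v).offDiag),
      Ex (fun φ : V → C => ind (∀ l : Λ, φ (g l).1 = l ∧ φ (g l).2 = l))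
        ≤ (1 / (Fintype.card C : ℝ)) ^ (2 * s) := by
    intro g hg
    rw [Fintype.mem_piFinset] at hg
    by_cases hex : ∃ φ0 : V → C, ∀ l : Λ, φ0 (g l).1 = l ∧ φ0 (g l).2 = l
    · obtain ⟨φ0, h0⟩ := hex
      let U : Finset V := (univ : Finset Λ).biUnion (fun l => {(g l).1, (g l).2})
      have hU : U.card = 2 * s := by
        rw [Finset.card_biUnion]
        · have : ∀ l ∈ (univ : Finset Λ), ({(g l).1, (g l).2} : Finset V).card = 2 := by
            intro l _
            rw [Finset.card_pair (Finset.mem_offDiag.mp (hg l)).2.2]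
          rw [Finset.sum_congr rfl this, Finset.sum_const, Finset.card_univ, Fintype.card_coe, hΛ.2,
            smul_eq_mul, mul_comm]
        · intro l _ l' _ hne
          change Disjoint ({(g l).1, (g l).2} : Finset V) {(g l').1, (g l').2}
          rw [Finset.disjoint_left]
          intro y hy hy'
          have a1 : φ0 y = l := by
            simp only [Finset.mem_insert, Finset.mem_singleton] at hy
            rcases hy with rfl | rfl
            · exact (h0 l).1
            · exact (h0 l).2
          have a2 : φ0 y = l' := by
            simp only [Finset.mem_insert, Finset.mem_singleton] at hy'
            rcases hy' with rfl | rfl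
            · exact (h0 l').1
            · exact (h0 l').2
          exact hne (Subtype.ext (a1.symm.trans a2))
      rw [← hU]
      refine le_trans (Ex_mono (fun φ => ?_)) (Ex_agree U φ0)
      by_cases h : ∀ l : Λ, φ (g l).1 = l ∧ φ (g l).2 = l
      · rw [ind_true h, ind_true]
        intro u hu
        obtain ⟨l, _, hl⟩ := Finset.mem_biUnion.mp hu
        simp only [Finset.mem_insert, Finset.mem_singleton] at hl
        rcases hl with rfl | rfl
        · rw [(h l).1, (h0 l).1]
        · rw [(h l).2, (h0 l).2]
      · rw [ind_false h]; exact ind_nonneg _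
    · have : (fun φ : V → C => ind (∀ l : Λ, φ (g l).1 = l ∧ φ (g l).2 = l)) = fun _ => 0 := by
        funext φ
        exact ind_false (fun h => hex ⟨φ, h⟩)
      rw [this]
      have h0 : Ex (fun _ : V → C => (0 : ℝ)) = 0 := by simp [Ex]
      rw [h0]; positivity
  refine (Finset.sum_le_sum h2).trans ?_
  have hcard : (Fintype.piFinset (fun _ : Λ => (nb v).offDiag)).card = (nb v).offDiag.card ^ s := by
    rw [Fintype.card_piFinset, Finset.prod_const, Finset.card_univ, Fintype.card_coe, hΛ.2]
  rw [Finset.sum_const, hcard, nsmul_eq_mul]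
  have h3 : ((nb v).offDiag.card : ℝ) ≤ (d : ℝ) ^ 2 := by
    rw [Finset.offDiag_card]
    have := hd1 v
    have h4 : (nb v).card * (nb v).card - (nb v).card ≤ d ^ 2 := by
      rw [sq]; exact (Nat.sub_le _ _).trans (Nat.mul_le_mul this this)
    exact_mod_cast h4
  rw [div_eq_mul_one_div (d : ℝ), mul_pow, pow_mul (d : ℝ)]
  push_cast
  gcongr

end S4
end GQ8

set_option linter.unusedSectionVars false
set_option linter.unusedVariables false
namespace GQ8
open Finset

section S5
variable {V C : Type*} [Fintype V] [DecidableEq V] [Fintype C] [DecidableEq C]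
variable (nb : V → Finset V)

def codeg (u y : V) : ℕ := (nb u ∩ nb y).card

theorem codeg_le {d : ℕ} (hd1 : ∀ v, (nb v).card ≤ d) (u y : V) : codeg nb u y ≤ d :=
  (Finset.card_le_card Finset.inter_subset_left).trans (hd1 u)

theorem sum_codeg {d : ℕ} (hsymm : ∀ u v, u ∈ nb v → v ∈ nb u) (hd1 : ∀ v, (nb v).card ≤ d) (u : V) :
    ∑ y, codeg nb u y ≤ d * d := by
  have h : ∀ y, codeg nb u y = ∑ x ∈ nb u, if y ∈ nb x then 1 else 0 := by
    intro y
    unfold codeg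
    rw [← Finset.card_filter]
    congr 1
    ext x
    simp only [Finset.mem_inter, Finset.mem_filter]
    exact and_congr_right (fun _ => ⟨hsymm _ _, hsymm _ _⟩)
  simp only [h]
  rw [Finset.sum_comm]
  have h2 : ∀ x ∈ nb u, (∑ y, if y ∈ nb x then 1 else 0) ≤ d := by
    intro x _
    rw [← Finset.card_filter]
    simpa using hd1 x
  refine (Finset.sum_le_sum h2).trans ?_
  rw [Finset.sum_const, smul_eq_mul]
  exact Nat.mul_le_mul_right _ (hd1 u)

theorem FB_le (hsymm : ∀ u v, u ∈ nb v → v ∈ nb u) (φ : V → C) (u : V) (l : C) :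
    ((FB nb φ u l).card : ℝ) ≤ ∑ y ∈ univ.erase u, ind (φ y = l) * (codeg nb u y : ℝ) := by
  classical
  have h : FB nb φ u l ⊆ ((univ.erase u).filter (fun y => φ y = l)).biUnion
      (fun y => nb u ∩ nb y) := by
    intro x hx
    simp only [FB, Finset.mem_filter] at hx
    obtain ⟨hxu, w, hw, hwu, hl⟩ := hx
    rw [Finset.mem_biUnion]
    exact ⟨w, by simp [hwu, hl], Finset.mem_inter.mpr ⟨hxu, hsymm _ _ hw⟩⟩
  have h2 := (Finset.card_le_card h).trans Finset.card_biUnion_le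
  have h3 : ((FB nb φ u l).card : ℝ) ≤
      ∑ y ∈ (univ.erase u).filter (fun y => φ y = l), (codeg nb u y : ℝ) := by
    exact_mod_cast h2
  refine h3.trans (le_of_eq ?_)
  rw [Finset.sum_filter]
  refine Finset.sum_congr rfl (fun y _ => ?_)
  by_cases hy : φ y = l
  · rw [if_pos hy, ind_true hy, one_mul]
  · rw [if_neg hy, ind_false hy, zero_mul]

theorem exp_convex (lam t : ℝ) (h0 : 0 ≤ t) (h1 : t ≤ 1) :
    Real.exp (lam * t) ≤ 1 + t * Real.exp lam := by
  have := convexOn_exp.2 (Set.mem_univ (0 : ℝ)) (Set.mem_univ lam) (by linarith : 0 ≤ 1 - t) h0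
    (by ring)
  simp only [smul_eq_mul, mul_zero, zero_add, Real.exp_zero, mul_one] at this
  rw [mul_comm t lam] at this
  linarith

theorem E3_single [Nonempty C] (hsymm : ∀ u v, u ∈ nb v → v ∈ nb u)
    (d s : ℕ) (hd : 0 < d) (hd1 : ∀ v, (nb v).card ≤ d)
    (hd2 : ∀ v, d ≤ 2 * (nb v).card) (lam : ℝ) (hlam : 0 ≤ lam) (Λ : Finset C) (hΛ : Λ.card = s)
    (g : Λ → V) :
    Ex (fun φ : V → C => ind (∀ l : Λ, φ (g l) = l ∧ inZ nb φ (g l))) ≤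
      (1 / (Fintype.card C : ℝ)) ^ s *
        Real.exp (-(lam * s / 4) + Real.exp lam * s * d / (Fintype.card C : ℝ)) := by
  classical
  have hc : (0 : ℝ) < (Fintype.card C : ℝ) := by exact_mod_cast Fintype.card_pos
  have hdR : (0 : ℝ) < d := by exact_mod_cast hd
  by_cases hex : ∃ φ0 : V → C, ∀ l : Λ, φ0 (g l) = l ∧ inZ nb φ0 (g l)
  swap
  · have : (fun φ : V → C => ind (∀ l : Λ, φ (g l) = l ∧ inZ nb φ (g l))) = fun _ => 0 := by
      funext φ
      exact ind_false (fun h => hex ⟨φ, h⟩)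
    rw [this]
    have h0 : Ex (fun _ : V → C => (0 : ℝ)) = 0 := by simp [Ex]
    rw [h0]; positivity
  obtain ⟨φ0, hφ0⟩ := hex
  have hginj : Function.Injective g := by
    intro l l' h
    have := (hφ0 l).1
    rw [h, (hφ0 l').1] at this
    exact Subtype.ext this.symm
  let U : Finset V := univ.image g
  have hU : U.card = s := by
    rw [Finset.card_image_of_injective _ hginj, Finset.card_univ, Fintype.card_coe, hΛ]
  let hh : V → C → ℝ := fun y c => ∑ l : Λ, ind (c = l) * ((codeg nb (g l) y : ℝ) / d)
  have hh0 : ∀ y c, 0 ≤ hh y c := fun y c => Finset.sum_nonneg (fun l _ =>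
    mul_nonneg (ind_nonneg _) (by positivity))
  have hh1 : ∀ y c, hh y c ≤ 1 := by
    intro y c
    calc hh y c ≤ ∑ l : Λ, ind (c = l) := by
          refine Finset.sum_le_sum (fun l _ => ?_)
          refine mul_le_of_le_one_right (ind_nonneg _) ?_
          rw [div_le_one hdR]
          exact_mod_cast codeg_le nb hd1 _ _
      _ = ∑ l ∈ Λ, ind (l = c) := by
          rw [← Finset.sum_coe_sort Λ]
          exact Finset.sum_congr rfl (fun l _ => congrArg ind (propext eq_comm))
      _ ≤ 1 := by rw [sum_ind_eq]; exact ind_le_one _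
  let β : V → ℝ := fun y => Real.exp lam / (Fintype.card C : ℝ) *
    ∑ l : Λ, ((codeg nb (g l) y : ℝ) / d)
  have hβ0 : ∀ y, 0 ≤ β y := fun y => mul_nonneg (by positivity)
    (Finset.sum_nonneg (fun l _ => by positivity))
  have hsumc : ∀ y, ∑ c, hh y c = ∑ l : Λ, ((codeg nb (g l) y : ℝ) / d) := by
    intro y
    simp only [hh]
    rw [Finset.sum_comm]
    refine Finset.sum_congr rfl (fun l _ => ?_)
    rw [← Finset.sum_mul, sum_ind_eq, ind_true (Finset.mem_univ _), one_mul]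
  have hβ : ∀ y, (∑ c, Real.exp (lam * hh y c)) / (Fintype.card C : ℝ) ≤ Real.exp (β y) := by
    intro y
    have h1 : ∑ c, Real.exp (lam * hh y c) ≤ ∑ c, (1 + hh y c * Real.exp lam) :=
      Finset.sum_le_sum (fun c _ => exp_convex lam _ (hh0 y c) (hh1 y c))
    rw [Finset.sum_add_distrib, ← Finset.sum_mul, hsumc, Finset.sum_const, Finset.card_univ,
      nsmul_eq_mul, mul_one] at h1
    have h2 := Real.add_one_le_exp (β y)
    refine le_trans ?_ h2
    rw [div_le_iff₀ hc]
    refine h1.trans (le_of_eq ?_)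
    simp only [β]
    field_simp
    ring
  have hsumβ : ∑ y, β y ≤ Real.exp lam * s * d / (Fintype.card C : ℝ) := by
    simp only [β]
    rw [← Finset.mul_sum, Finset.sum_comm]
    have h1 : ∀ l : Λ, ∑ y, (codeg nb (g l) y : ℝ) / d ≤ d := by
      intro l
      rw [← Finset.sum_div, div_le_iff₀ hdR]
      exact_mod_cast sum_codeg nb hsymm hd1 (g l)
    have h2 : ∑ l : Λ, ∑ y, (codeg nb (g l) y : ℝ) / d ≤ s * d := by
      refine (Finset.sum_le_sum (fun l _ => h1 l)).trans (le_of_eq ?_)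
      rw [Finset.sum_const, Finset.card_univ, Fintype.card_coe, hΛ, nsmul_eq_mul]
    calc _ ≤ Real.exp lam / (Fintype.card C : ℝ) * (s * d) :=
          mul_le_mul_of_nonneg_left h2 (by positivity)
      _ = _ := by ring
  have hmain := Ex_agree_mul U φ0 (fun y c => Real.exp (lam * hh y c)) β hβ0
    (fun _ _ => (Real.exp_pos _).le) hβ
  have hpt : ∀ φ : V → C, ind (∀ l : Λ, φ (g l) = l ∧ inZ nb φ (g l)) ≤
      Real.exp (-(lam * s / 4)) *
        ∏ y, (if y ∈ U then ind (φ y = φ0 y) else Real.exp (lam * hh y (φ y))) := by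
    intro φ
    by_cases h : ∀ l : Λ, φ (g l) = l ∧ inZ nb φ (g l)
    swap
    · rw [ind_false h]
      refine mul_nonneg (Real.exp_pos _).le (Finset.prod_nonneg (fun y _ => ?_))
      split_ifs
      · exact ind_nonneg _
      · exact (Real.exp_pos _).le
    rw [ind_true h]
    have hfac : ∀ y, (if y ∈ U then ind (φ y = φ0 y) else Real.exp (lam * hh y (φ y)))
        = Real.exp (if y ∈ U then 0 else lam * hh y (φ y)) := by
      intro y
      split_ifs with hy
      · obtain ⟨l, _, rfl⟩ := Finset.mem_image.mp hy
        rw [ind_true, Real.exp_zero]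
        rw [(h l).1, (hφ0 l).1]
      · rfl
    simp only [hfac]
    rw [← Real.exp_sum, ← Real.exp_add]
    apply Real.one_le_exp
    have hl : ∀ l : Λ, (d : ℝ) / 4 ≤
        ∑ y, (if y ∈ U then 0 else ind (φ y = l) * (codeg nb (g l) y : ℝ)) := by
      intro l
      have h1 := (h l).2
      unfold inZ fine at h1
      rw [(h l).1] at h1
      push Not at h1
      have h2 : (d : ℝ) / 4 ≤ (FB nb φ (g l) l).card := by
        have a1 := hd2 (g l)
        have a2 : d ≤ 4 * (FB nb φ (g l) l).card := by omega
        have a3 : (d : ℝ) ≤ 4 * (FB nb φ (g l) l).card := by exact_mod_cast a2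
        linarith
      refine h2.trans ((FB_le nb hsymm φ (g l) l).trans ?_)
      calc ∑ y ∈ univ.erase (g l), ind (φ y = l) * (codeg nb (g l) y : ℝ)
          ≤ ∑ y ∈ univ.erase (g l), (if y ∈ U then 0 else ind (φ y = l) * (codeg nb (g l) y : ℝ)) := by
            refine Finset.sum_le_sum (fun y hy => ?_)
            split_ifs with hyU
            · obtain ⟨l', _, rfl⟩ := Finset.mem_image.mp hyU
              rw [ind_false, zero_mul]
              rw [(h l').1]
              intro he
              exact (Finset.ne_of_mem_erase hy) (congrArg g (Subtype.ext he))
            · exact le_rfl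
        _ ≤ _ := by
            refine Finset.sum_le_sum_of_subset_of_nonneg (Finset.erase_subset _ _) (fun y _ _ => ?_)
            split_ifs
            · exact le_rfl
            · exact mul_nonneg (ind_nonneg _) (by positivity)
    have h3 : ∑ y, (if y ∈ U then 0 else lam * hh y (φ y)) = (lam / d) *
        ∑ l : Λ, ∑ y, (if y ∈ U then 0 else ind (φ y = l) * (codeg nb (g l) y : ℝ)) := by
      rw [Finset.sum_comm, Finset.mul_sum]
      refine Finset.sum_congr rfl (fun y _ => ?_)
      split_ifs
      · simp
      · simp only [hh]
        rw [Finset.mul_sum, Finset.mul_sum]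
        refine Finset.sum_congr rfl (fun l _ => ?_)
        field_simp
    have h4 : (s : ℝ) * (d / 4) ≤
        ∑ l : Λ, ∑ y, (if y ∈ U then 0 else ind (φ y = l) * (codeg nb (g l) y : ℝ)) := by
      refine le_trans (le_of_eq ?_) (Finset.sum_le_sum (fun l _ => hl l))
      rw [Finset.sum_const, Finset.card_univ, Fintype.card_coe, hΛ, nsmul_eq_mul]
    rw [h3]
    have h5 := mul_le_mul_of_nonneg_left h4 (by positivity : (0 : ℝ) ≤ lam / d)
    have h6 : lam / d * ((s : ℝ) * (d / 4)) = lam * s / 4 := by field_simp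
    linarith
  refine (Ex_mono hpt).trans ?_
  rw [Ex_const_mul, Real.exp_add]
  rw [hU] at hmain
  have h7 : Real.exp (∑ y, β y) ≤ Real.exp (Real.exp lam * s * d / (Fintype.card C : ℝ)) :=
    Real.exp_le_exp.mpr hsumβ
  have h8 : (0 : ℝ) ≤ (1 / (Fintype.card C : ℝ)) ^ s := by positivity
  calc _ ≤ Real.exp (-(lam * s / 4)) * ((1 / (Fintype.card C : ℝ)) ^ s *
        Real.exp (Real.exp lam * s * d / (Fintype.card C : ℝ))) := by
        refine mul_le_mul_of_nonneg_left (hmain.trans ?_) (Real.exp_pos _).le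
        exact mul_le_mul_of_nonneg_left h7 h8
    _ = _ := by ring

theorem E3_bound [Nonempty C] (hsymm : ∀ u v, u ∈ nb v → v ∈ nb u)
    (d s : ℕ) (hd : 0 < d) (hd1 : ∀ v, (nb v).card ≤ d)
    (hd2 : ∀ v, d ≤ 2 * (nb v).card) (lam : ℝ) (hlam : 0 ≤ lam) (v : V) (B : Finset C) :
    Ex (fun φ : V → C => ind (s ≤ (G3 nb φ v B).card))
      ≤ (B.card.choose s : ℝ) * (((d : ℝ) / (Fintype.card C : ℝ)) ^ s *
        Real.exp (-(lam * s / 4) + Real.exp lam * s * d / (Fintype.card C : ℝ))) := by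
  classical
  have hc : (0 : ℝ) < (Fintype.card C : ℝ) := by exact_mod_cast Fintype.card_pos
  have h1 : ∀ φ : V → C, ind (s ≤ (G3 nb φ v B).card) ≤
      ∑ Λ ∈ B.powersetCard s, ∑ g ∈ Fintype.piFinset (fun _ : Λ => nb v),
        ind (∀ l : Λ, φ (g l) = l ∧ inZ nb φ (g l)) := by
    intro φ
    by_cases h : s ≤ (G3 nb φ v B).card
    · rw [ind_true h]
      obtain ⟨Λ, hΛ1, hΛ2⟩ := Finset.exists_subset_card_eq h
      have hΛ : Λ ∈ B.powersetCard s :=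
        Finset.mem_powersetCard.mpr ⟨hΛ1.trans (Finset.filter_subset _ _), hΛ2⟩
      have hex : ∀ l : Λ, ∃ u ∈ nb v, φ u = l ∧ inZ nb φ u := by
        intro l
        have := hΛ1 l.2
        simp only [G3, Finset.mem_filter] at this
        exact this.2
      choose g hg1 hg2 using hex
      rw [← ind_true hg2]
      refine le_trans ?_ (Finset.single_le_sum (f := fun Λ : Finset C =>
        ∑ g ∈ Fintype.piFinset (fun _ : Λ => nb v),
        ind (∀ l : Λ, φ (g l) = l ∧ inZ nb φ (g l)))
        (fun M _ => Finset.sum_nonneg (fun Λ _ => ind_nonneg _)) hΛ)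
      exact Finset.single_le_sum (f := fun g : Λ → V =>
        ind (∀ l : Λ, φ (g l) = l ∧ inZ nb φ (g l))) (fun _ _ => ind_nonneg _)
        (Fintype.mem_piFinset.mpr hg1)
    · rw [ind_false h]
      exact Finset.sum_nonneg (fun M _ => Finset.sum_nonneg (fun Λ _ => ind_nonneg _))
  refine (Ex_mono h1).trans ?_
  rw [Ex_sum, ← Finset.card_powersetCard, ← nsmul_eq_mul, ← Finset.sum_const]
  refine Finset.sum_le_sum (fun Λ hΛ => ?_)
  rw [Finset.mem_powersetCard] at hΛ
  rw [Ex_sum]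
  refine (Finset.sum_le_sum (fun g _ =>
    E3_single nb hsymm d s hd hd1 hd2 lam hlam Λ hΛ.2 g)).trans ?_
  have hcard : (Fintype.piFinset (fun _ : Λ => nb v)).card = (nb v).card ^ s := by
    rw [Fintype.card_piFinset, Finset.prod_const, Finset.card_univ, Fintype.card_coe, hΛ.2]
  rw [Finset.sum_const, hcard, nsmul_eq_mul, ← mul_assoc]
  refine mul_le_mul_of_nonneg_right ?_ (Real.exp_pos _).le
  rw [div_eq_mul_one_div (d : ℝ), mul_pow]
  have h3 : ((nb v).card : ℝ) ≤ d := by exact_mod_cast hd1 v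
  push_cast
  gcongr

theorem stage1 [Nonempty C] (side : V → Bool) (hside : ∀ u v, u ∈ nb v → side u ≠ side v)
    (hsymm : ∀ u v, u ∈ nb v → v ∈ nb u)
    (d s q : ℕ) (hd : 0 < d) (hd1 : ∀ v, (nb v).card ≤ d) (hd2 : ∀ v, d ≤ 2 * (nb v).card)
    (lam : ℝ) (hlam : 0 ≤ lam) (A : V → C → Finset C) (hA : ∀ v k, (A v k).card = q)
    (hsq : 3 * s ≤ q) (p0 : ℝ)
    (hE1 : (q.choose (3 * s) : ℝ) *
        Real.exp (-(((q : ℝ) - (3 * s : ℕ)) * d / (4 * (Fintype.card C : ℝ)))) ≤ p0)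
    (hE2 : (q.choose s : ℝ) * ((d : ℝ) / (Fintype.card C : ℝ)) ^ (2 * s) ≤ p0)
    (hE3 : (q.choose s : ℝ) * (((d : ℝ) / (Fintype.card C : ℝ)) ^ s *
        Real.exp (-(lam * s / 4) + Real.exp lam * s * d / (Fintype.card C : ℝ))) ≤ p0)
    (hL : 12 * (Fintype.card C : ℝ) * p0 * ((d : ℝ) + 1) ^ 6 ≤ 1) :
    ∃ φ : V → C, ∀ v k, fine nb φ v k → s ≤ (YY nb A φ v k).card := by
  have hp0 : 0 ≤ p0 := le_trans (by positivity) hE2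
  have hlll : ∃ φ : V → C, ∀ v, ¬ ∃ k, fine nb φ v k ∧ (YY nb A φ v k).card < s := by
    refine LLL (fun (v : V) (φ : V → C) => ∃ k, fine nb φ v k ∧ (YY nb A φ v k).card < s)
      (fun v => ball nb 3 v) (fun v => bad_dep nb A s v) ((Fintype.card C : ℝ) * (3 * p0))
      ((d + 1) ^ 6) (by positivity) ?_ ?_ (Nat.one_le_pow _ _ (by omega)) ?_
    · intro v
      have h1 : ∀ φ : V → C, ind (∃ k, fine nb φ v k ∧ (YY nb A φ v k).card < s) ≤
          ∑ k, (ind (fine nb φ v k ∧ (G1 nb φ v k (A v k)).card < 3 * s)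
            - (-1) * (ind (s ≤ (G2 nb φ v (A v k)).card) - (-1) * ind (s ≤ (G3 nb φ v (A v k)).card))) := by
        intro φ
        have hnn : ∀ k ∈ (univ : Finset C),
            0 ≤ (ind (fine nb φ v k ∧ (G1 nb φ v k (A v k)).card < 3 * s)
            - (-1) * (ind (s ≤ (G2 nb φ v (A v k)).card) - (-1) * ind (s ≤ (G3 nb φ v (A v k)).card))) := by
          intro k _
          have := ind_nonneg (fine nb φ v k ∧ (G1 nb φ v k (A v k)).card < 3 * s)
          have := ind_nonneg (s ≤ (G2 nb φ v (A v k)).card)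
          have := ind_nonneg (s ≤ (G3 nb φ v (A v k)).card)
          linarith
        by_cases h : ∃ k, fine nb φ v k ∧ (YY nb A φ v k).card < s
        · rw [ind_true h]
          obtain ⟨k, hf, hk⟩ := h
          refine le_trans ?_ (Finset.single_le_sum hnn (Finset.mem_univ k))
          have n1 := ind_nonneg (fine nb φ v k ∧ (G1 nb φ v k (A v k)).card < 3 * s)
          have n2 := ind_nonneg (s ≤ (G2 nb φ v (A v k)).card)
          have n3 := ind_nonneg (s ≤ (G3 nb φ v (A v k)).card)
          by_cases c1 : (G1 nb φ v k (A v k)).card < 3 * s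
          · have := ind_true (P := fine nb φ v k ∧ (G1 nb φ v k (A v k)).card < 3 * s) ⟨hf, c1⟩
            linarith
          by_cases c2 : s ≤ (G2 nb φ v (A v k)).card
          · have := ind_true c2
            linarith
          by_cases c3 : s ≤ (G3 nb φ v (A v k)).card
          · have := ind_true c3
            linarith
          have := card_YY nb A φ v k
          omega
        · rw [ind_false h]
          exact Finset.sum_nonneg hnn
      refine (Ex_mono h1).trans ?_
      rw [Ex_sum, ← nsmul_eq_mul, ← Finset.card_univ, ← Finset.sum_const]
      refine Finset.sum_le_sum (fun k _ => ?_)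
      rw [Ex_sub, Ex_const_mul, Ex_sub, Ex_const_mul]
      have b1 := E1_bound nb side hside d (3 * s) hd2 v k (A v k) (by rw [hA]; exact hsq)
      have b2 := E2_bound nb d s hd1 v (A v k)
      have b3 := E3_bound nb hsymm d s hd hd1 hd2 lam hlam v (A v k)
      rw [hA] at b1 b2 b3
      linarith
    · intro v
      refine le_trans (Finset.card_le_card ?_) (ball_card nb hd1 6 v)
      intro w hw
      simp only [Finset.mem_filter, Finset.mem_univ, true_and, Finset.not_disjoint_iff] at hw
      obtain ⟨y, hy1, hy2⟩ := hw
      exact ball_trans nb (n := 3) (m := 3) hy1 (ball_symm nb hsymm hy2)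
    · push_cast
      linarith
  obtain ⟨φ, hφ⟩ := hlll
  refine ⟨φ, fun v k hf => ?_⟩
  by_contra h
  exact hφ v ⟨k, hf, by omega⟩
end S5
end GQ8

set_option linter.unusedSectionVars false
set_option linter.unusedVariables false
namespace GQ8
open Finset

section S6
variable {V C : Type*} [Fintype V] [DecidableEq V] [Fintype C] [DecidableEq C]
variable (nb : V → Finset V)

open Classical in
theorem nonfine_card {d : ℕ} (hd1 : ∀ v, (nb v).card ≤ d) (φ : V → C)
    (z : V) (hz : 0 < (nb z).card) :
    (univ.filter (fun k => ¬ fine nb φ z k)).card ≤ 2 * d := by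
  have h1 : ∑ k, (FB nb φ z k).card ≤ (nb z).card * d := by
    have : ∀ k, (FB nb φ z k).card = ∑ u ∈ nb z, if (∃ w ∈ nb u, w ≠ z ∧ φ w = k) then 1 else 0 := by
      intro k
      rw [← Finset.card_filter]
      rfl
    simp only [this]
    rw [Finset.sum_comm, ← smul_eq_mul]
    refine Finset.sum_le_card_nsmul _ _ _ (fun u _ => ?_)
    rw [← Finset.card_filter]
    refine le_trans (Finset.card_le_card (t := (nb u).image φ) ?_)
      (Finset.card_image_le.trans (hd1 u))
    intro k hk
    simp only [Finset.mem_filter, Finset.mem_univ, true_and] at hk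
    obtain ⟨w, hw, _, rfl⟩ := hk
    exact Finset.mem_image_of_mem _ hw
  have h2 : (univ.filter (fun k => ¬ fine nb φ z k)).card * (nb z).card
      ≤ ∑ k ∈ univ.filter (fun k => ¬ fine nb φ z k), 2 * (FB nb φ z k).card := by
    rw [← smul_eq_mul]
    refine Finset.card_nsmul_le_sum _ _ _ (fun k hk => ?_)
    have hk' := (Finset.mem_filter.mp hk).2
    unfold fine at hk'
    omega
  have h3 : ∑ k ∈ univ.filter (fun k => ¬ fine nb φ z k), 2 * (FB nb φ z k).card
      ≤ ∑ k, 2 * (FB nb φ z k).card :=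
    Finset.sum_le_sum_of_subset (Finset.filter_subset _ _)
  have h5 : ∑ k, 2 * (FB nb φ z k).card = 2 * ∑ k, (FB nb φ z k).card := by rw [Finset.mul_sum]
  have h4 : (univ.filter (fun k => ¬ fine nb φ z k)).card * (nb z).card ≤ 2 * d * (nb z).card := by
    nlinarith
  exact Nat.le_of_mul_le_mul_right h4 hz

theorem assemble [Nonempty C] (side : V → Bool) (hside : ∀ u v, u ∈ nb v → side u ≠ side v)
    (hsymm : ∀ u v, u ∈ nb v → v ∈ nb u)
    (d s q : ℕ) (hd : 0 < d) (hs : 0 < s) (hd1 : ∀ v, (nb v).card ≤ d)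
    (hd2 : ∀ v, d ≤ 2 * (nb v).card)
    (Nb : Bool → C → Finset C) (hNb : ∀ b k, (Nb b k).card = q)
    (hNs : ∀ b k l, l ∈ Nb b k ↔ k ∈ Nb (!b) l)
    (hN : 4 * d ≤ Fintype.card C) (hN2 : 64 * (d * d * q : ℝ) ≤ (Fintype.card C : ℝ) ^ 2 * s)
    (φ : V → C)
    (hφ : ∀ v k, fine nb φ v k → s ≤ (YY nb (fun v k => Nb (side v) k) φ v k).card) :
    ∃ (H : SimpleGraph V) (ψ : V → C),
      (∀ v u, H.Adj v u → u ∈ nb v ∧ ψ u ∈ Nb (side v) (ψ v)) ∧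
      (∀ v u u', H.Adj v u → H.Adj v u' → ψ u = ψ u' → u = u') ∧
      ∀ v, ∃ T : Finset V, (∀ u ∈ T, H.Adj v u) ∧ (s : ℝ) / 2 ≤ T.card := by
  classical
  have hc : (0 : ℝ) < (Fintype.card C : ℝ) := by exact_mod_cast Fintype.card_pos
  have hsR : (0 : ℝ) < s := by exact_mod_cast hs
  let A : V → C → Finset C := fun v k => Nb (side v) k
  let Z : Finset V := univ.filter (fun v => inZ nb φ v)
  let Lst : V → Finset C := fun z => univ.filter (fun k => fine nb φ z k)
  let L : V → V → C → ℝ := fun z z' k => (((nb z ∩ nb z').filter (fun u => φ u ∈ A z k)).card : ℝ)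
  have hss : ∀ u z z', u ∈ nb z → u ∈ nb z' → side z = side z' := by
    intro u z z' h1 h2
    have a1 := hside u z h1
    have a2 := hside u z' h2
    revert a1 a2
    cases side u <;> cases side z <;> cases side z' <;> simp
  obtain ⟨k, hk⟩ := stage2 L Lst ((s : ℝ) / 2) Z (fun _ _ _ => Nat.cast_nonneg _)
    (by
      intro x y c
      simp only [L]
      congr 2
      ext u
      simp only [Finset.mem_filter, Finset.mem_inter, A]
      constructor
      · rintro ⟨⟨h1, h2⟩, h3⟩
        rw [hss u x y h1 h2] at h3
        exact ⟨⟨h2, h1⟩, h3⟩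
      · rintro ⟨⟨h1, h2⟩, h3⟩
        rw [hss u y x h1 h2] at h3
        exact ⟨⟨h2, h1⟩, h3⟩)
    (by
      intro z _
      have h1 := nonfine_card nb hd1 φ z (by have := hd2 z; omega)
      have h2 := Finset.card_filter_add_card_filter_not (s := (univ : Finset C))
        (fun k => fine nb φ z k)
      rw [Finset.card_univ] at h2
      have h3 : Fintype.card C ≤ 2 * (Lst z).card := by
        simp only [Lst]; omega
      exact_mod_cast h3)
    (d * d * q : ℝ) (by positivity)
    (by
      intro x _
      have h1 : ∀ z, ∑ c, L x z c = (codeg nb x z : ℝ) * q := by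
        intro z
        simp only [L]
        have : ∀ c, (((nb x ∩ nb z).filter (fun u => φ u ∈ A x c)).card : ℝ)
            = ∑ u ∈ nb x ∩ nb z, if φ u ∈ A x c then (1 : ℝ) else 0 := by
          intro c
          rw [Finset.card_filter]; push_cast; rfl
        simp only [this]
        rw [Finset.sum_comm]
        have h2 : ∀ u ∈ nb x ∩ nb z, (∑ c, if φ u ∈ A x c then (1 : ℝ) else 0) = q := by
          intro u _
          rw [← hNb (!side x) (φ u), Finset.sum_ite, Finset.sum_const_zero, add_zero,
            Finset.sum_const, nsmul_eq_mul, mul_one]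
          congr 2
          ext c
          simp only [Finset.mem_filter, Finset.mem_univ, true_and, A]
          exact hNs _ _ _
        rw [Finset.sum_congr rfl h2, Finset.sum_const, nsmul_eq_mul]
        rfl
      simp only [h1]
      rw [← Finset.sum_mul]
      refine mul_le_mul_of_nonneg_right ?_ (Nat.cast_nonneg _)
      have h3 := sum_codeg nb hsymm hd1 x
      have h4 : ∑ z ∈ Z.erase x, codeg nb x z ≤ ∑ y, codeg nb x y :=
        Finset.sum_le_sum_of_subset (Finset.subset_univ _)
      exact_mod_cast h4.trans h3)
    (by linarith)
  let ψ : V → C := fun v => if inZ nb φ v then k v else φ v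
  have ψZ : ∀ v, inZ nb φ v → ψ v = k v := fun v h => by simp only [ψ]; rw [if_pos h]
  have ψn : ∀ v, ¬ inZ nb φ v → ψ v = φ v := fun v h => by simp only [ψ]; rw [if_neg h]
  have hfine : ∀ v, fine nb φ v (ψ v) := by
    intro v
    by_cases h : inZ nb φ v
    · rw [ψZ v h]
      have := (hk v (by simp [Z, h])).1
      simpa [Lst] using this
    · rw [ψn v h]
      unfold inZ at h
      exact not_not.mp h
  let R : V → V → Prop := fun v u => u ∈ YY nb A φ v (ψ v) ∧
    (inZ nb φ v → ∀ z', inZ nb φ z' → z' ≠ v → z' ∈ nb u → ψ z' ≠ ψ v)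
  have hR : ∀ v u, R v u → u ∈ nb v ∧ ¬ inZ nb φ u ∧ φ u ∈ A v (ψ v) ∧
      (∀ u' ∈ nb v, φ u' = φ u → u' = u) ∧ (∀ w ∈ nb u, φ w = ψ v → w = v) := by
    rintro v u ⟨h, _⟩
    simp only [YY, Finset.mem_filter] at h
    obtain ⟨h1, h2, h3, h4, h5⟩ := h
    refine ⟨h1, h2, h3, h4, ?_⟩
    intro w hw he
    by_contra hne
    refine h5 ?_
    simp only [FB, Finset.mem_filter]
    exact ⟨h1, w, hw, hne, he⟩
  have hirr : ∀ v u, R v u → u ≠ v := by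
    intro v u h he
    have := hside u v (hR v u h).1
    rw [he] at this
    exact this rfl
  let H : SimpleGraph V :=
    { Adj := fun v u => R v u ∨ R u v
      symm := ⟨fun v u h => h.symm⟩
      loopless := ⟨fun v h => by
        rcases h with h | h <;> exact hirr _ _ h rfl⟩ }
  refine ⟨H, ψ, ?_, ?_, ?_⟩
  · rintro v u (h | h)
    · obtain ⟨h1, h2, h3, _⟩ := hR _ _ h
      refine ⟨h1, ?_⟩
      rw [ψn u h2]; exact h3
    · obtain ⟨h1, h2, h3, _⟩ := hR _ _ h
      refine ⟨hsymm _ _ h1, ?_⟩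
      rw [hNs, ψn v h2]
      have : (!side v) = side u := by
        have := hside v u h1
        revert this
        cases side v <;> cases side u <;> simp
      rw [this]; exact h3
  · have key : ∀ v u u', R u' v → u ∈ nb v → ¬ inZ nb φ u → ψ u = ψ u' → u = u' := by
      intro v u u' h hu hz he
      rw [ψn u hz] at he
      exact (hR _ _ h).2.2.2.2 u hu he
    rintro v u u' (h | h) (h' | h') he
    · have a := hR _ _ h
      have b := hR _ _ h'
      rw [ψn u a.2.1, ψn u' b.2.1] at he
      exact b.2.2.2.1 u a.1 he
    · have a := hR _ _ h
      exact key v u u' h' a.1 a.2.1 he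
    · have a := hR _ _ h'
      exact (key v u' u h a.1 a.2.1 he.symm).symm
    · by_cases hz : inZ nb φ u
      · by_cases hz' : inZ nb φ u'
        · by_contra hne
          exact h'.2 hz' u hz hne (hsymm _ _ (hR _ _ h).1) he
        · exact (key v u' u h (hsymm _ _ (hR _ _ h').1) hz' he.symm).symm
      · exact key v u u' h' (hsymm _ _ (hR _ _ h).1) hz he
  · intro v
    refine ⟨univ.filter (fun u => R v u), fun u hu => Or.inl (by simpa using hu), ?_⟩
    have hYs := hφ v (ψ v) (hfine v)
    by_cases hz : inZ nb φ v
    · have hvZ : v ∈ Z := by simp [Z, hz]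
      have h1 := (hk v hvZ).2
      have hsub : YY nb A φ v (ψ v) ⊆ univ.filter (fun u => R v u) ∪
          ((Z.erase v).filter (fun z' => k z' = k v)).biUnion
            (fun z' => (nb v ∩ nb z').filter (fun u => φ u ∈ A v (k v))) := by
        intro u hu
        by_cases hRu : R v u
        · exact Finset.mem_union_left _ (by simpa using hRu)
        · refine Finset.mem_union_right _ ?_
          have hex : ∃ z', inZ nb φ z' ∧ z' ≠ v ∧ z' ∈ nb u ∧ ψ z' = ψ v := by
            by_contra hno
            refine hRu ⟨hu, fun _ z' a1 a2 a3 a4 => hno ⟨z', a1, a2, a3, a4⟩⟩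
          obtain ⟨z', a1, a2, a3, a4⟩ := hex
          rw [ψZ z' a1, ψZ v hz] at a4
          rw [Finset.mem_biUnion]
          simp only [YY, Finset.mem_filter] at hu
          refine ⟨z', ?_, ?_⟩
          · simp [Z, a1, a2, a4]
          · rw [Finset.mem_filter, Finset.mem_inter]
            refine ⟨⟨hu.1, hsymm _ _ a3⟩, ?_⟩
            rw [← ψZ v hz]; exact hu.2.2.1
      have h2 := (Finset.card_le_card hsub).trans (Finset.card_union_le _ _)
      have h3 : ((((Z.erase v).filter (fun z' => k z' = k v)).biUnion
            (fun z' => (nb v ∩ nb z').filter (fun u => φ u ∈ A v (k v)))).card : ℝ)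
          ≤ ∑ z' ∈ Z.erase v, ind (k z' = k v) * L v z' (k v) := by
        have h4 : ∑ z' ∈ Z.erase v, ind (k z' = k v) * L v z' (k v)
            = ∑ z' ∈ (Z.erase v).filter (fun z' => k z' = k v), L v z' (k v) := by
          rw [Finset.sum_filter]
          refine Finset.sum_congr rfl (fun y _ => ?_)
          by_cases hy : k y = k v
          · rw [if_pos hy, ind_true hy, one_mul]
          · rw [if_neg hy, ind_false hy, zero_mul]
        rw [h4]
        simp only [L]
        exact_mod_cast Finset.card_biUnion_le
      have h5 : (s : ℝ) ≤ (univ.filter (fun u => R v u)).card +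
          (((Z.erase v).filter (fun z' => k z' = k v)).biUnion
            (fun z' => (nb v ∩ nb z').filter (fun u => φ u ∈ A v (k v)))).card := by
        exact_mod_cast hYs.trans h2
      linarith
    · have hsub : YY nb A φ v (ψ v) ⊆ univ.filter (fun u => R v u) := by
        intro u hu
        rw [Finset.mem_filter]
        exact ⟨Finset.mem_univ _, hu, fun h => absurd h hz⟩
      have h2 : (s : ℝ) ≤ (univ.filter (fun u => R v u)).card := by
        exact_mod_cast hYs.trans (Finset.card_le_card hsub)
      linarith

end S6
end GQ8

set_option linter.unusedSectionVars false
set_option linter.unusedVariables false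
namespace GQ8
open Finset

section Inc
variable {q : ℕ} [Fact q.Prime]

def Inc (p l : ZMod q × ZMod q × ZMod q) : Prop :=
  p.2.1 + l.2.1 = p.1 * l.1 ∧ p.2.2 + l.2.2 = p.1 * l.2.1

instance (p l : ZMod q × ZMod q × ZMod q) : Decidable (Inc p l) := by
  unfold Inc; infer_instance

def NB (b : Bool) (k : ZMod q × ZMod q × ZMod q) : Finset (ZMod q × ZMod q × ZMod q) :=
  if b then univ.filter (fun l => Inc k l) else univ.filter (fun p => Inc p k)

theorem mem_NB_true (k l : ZMod q × ZMod q × ZMod q) : l ∈ NB true k ↔ Inc k l := by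
  simp [NB]
theorem mem_NB_false (k l : ZMod q × ZMod q × ZMod q) : l ∈ NB false k ↔ Inc l k := by
  simp [NB]

theorem NB_symm (b : Bool) (k l : ZMod q × ZMod q × ZMod q) : l ∈ NB b k ↔ k ∈ NB (!b) l := by
  cases b
  · rw [mem_NB_false, Bool.not_false, mem_NB_true]
  · rw [mem_NB_true, Bool.not_true, mem_NB_false]

theorem NB_card (b : Bool) (k : ZMod q × ZMod q × ZMod q) : (NB b k).card = q := by
  obtain ⟨a, b', c⟩ := k
  cases b
  · have : NB false (a, b', c) = (univ : Finset (ZMod q)).image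
        (fun x => (x, x * a - b', x * b' - c)) := by
      ext ⟨x, y, z⟩
      rw [mem_NB_false]
      simp only [Inc, Finset.mem_image, Finset.mem_univ, true_and, Prod.mk.injEq]
      constructor
      · rintro ⟨h1, h2⟩
        exact ⟨x, rfl, by linear_combination -h1, by linear_combination -h2⟩
      · rintro ⟨w, rfl, rfl, rfl⟩
        constructor <;> ring
    rw [this, Finset.card_image_of_injective, Finset.card_univ, ZMod.card]
    intro x y h
    exact (Prod.mk.inj h).1
  · have : NB true (a, b', c) = (univ : Finset (ZMod q)).image
        (fun x => (x, a * x - b', a * (a * x - b') - c)) := by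
      ext ⟨x, y, z⟩
      rw [mem_NB_true]
      simp only [Inc, Finset.mem_image, Finset.mem_univ, true_and, Prod.mk.injEq]
      constructor
      · rintro ⟨h1, h2⟩
        exact ⟨x, rfl, by linear_combination -h1, by linear_combination -h2 - a * h1⟩
      · rintro ⟨w, rfl, rfl, rfl⟩
        constructor <;> ring
    rw [this, Finset.card_image_of_injective, Finset.card_univ, ZMod.card]
    intro x y h
    exact (Prod.mk.inj h).1

theorem pt_eq {p p' l : ZMod q × ZMod q × ZMod q} (h : Inc p l) (h' : Inc p' l)
    (ha : p.1 = p'.1) : p = p' := by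
  obtain ⟨h1, h2⟩ := h
  obtain ⟨h3, h4⟩ := h'
  refine Prod.ext ha (Prod.ext ?_ ?_)
  · linear_combination h1 - h3 + l.1 * ha
  · linear_combination h2 - h4 + l.2.1 * ha

theorem ln_eq {p l l' : ZMod q × ZMod q × ZMod q} (h : Inc p l) (h' : Inc p l')
    (ha : l.1 = l'.1) : l = l' := by
  obtain ⟨h1, h2⟩ := h
  obtain ⟨h3, h4⟩ := h'
  have e : l.2.1 = l'.2.1 := by linear_combination h1 - h3 + p.1 * ha
  refine Prod.ext ha (Prod.ext e ?_)
  linear_combination h2 - h4 + p.1 * e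

theorem no_digon {p p' l l' : ZMod q × ZMod q × ZMod q} (h1 : Inc p l) (h2 : Inc p l')
    (h3 : Inc p' l) (h4 : Inc p' l') : p = p' ∨ l = l' := by
  by_cases ha : p.1 = p'.1
  · exact Or.inl (pt_eq h1 h3 ha)
  · right
    refine ln_eq h1 h2 ?_
    have : (p.1 - p'.1) * (l.1 - l'.1) = 0 := by
      linear_combination -(h1.1 - h3.1 - h2.1 + h4.1)
    rcases mul_eq_zero.mp this with h | h
    · exact absurd (sub_eq_zero.mp h) ha
    · exact sub_eq_zero.mp h

theorem no_tri {p1 p2 p3 l12 l23 l31 : ZMod q × ZMod q × ZMod q} (a1 : Inc p1 l12)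
    (a2 : Inc p2 l12) (b2 : Inc p2 l23) (b3 : Inc p3 l23) (c3 : Inc p3 l31) (c1 : Inc p1 l31) :
    p1 = p2 ∨ p3 = p1 ∨ l12 = l31 := by
  by_cases h12 : p1.1 = p2.1
  · exact Or.inl (pt_eq a1 a2 h12)
  by_cases h31 : p3.1 = p1.1
  · exact Or.inr (Or.inl (pt_eq c3 c1 h31))
  right; right
  refine ln_eq a1 c1 ?_
  have e1 : (p1.1 - p2.1) * (l12.1 - l31.1) + (p2.1 - p3.1) * (l23.1 - l31.1) = 0 := by
    linear_combination -(a1.1 - a2.1 + b2.1 - b3.1 + c3.1 - c1.1)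
  have e2 : (p1.1 - p2.1) * (l12.2.1 - l31.2.1) + (p2.1 - p3.1) * (l23.2.1 - l31.2.1) = 0 := by
    linear_combination -(a1.2 - a2.2 + b2.2 - b3.2 + c3.2 - c1.2)
  have e3 : l12.2.1 - l31.2.1 = p1.1 * (l12.1 - l31.1) := by linear_combination a1.1 - c1.1
  have e4 : l23.2.1 - l31.2.1 = p3.1 * (l23.1 - l31.1) := by linear_combination b3.1 - c3.1
  rw [e3, e4] at e2
  have e5 : (p1.1 - p2.1) * ((p3.1 - p1.1) * (l12.1 - l31.1)) = 0 := by
    linear_combination p3.1 * e1 - e2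
  rcases mul_eq_zero.mp e5 with h | h
  · exact absurd (sub_eq_zero.mp h) h12
  rcases mul_eq_zero.mp h with h | h
  · exact absurd (sub_eq_zero.mp h) h31
  · exact sub_eq_zero.mp h

theorem NB_digon (b : Bool) {k k' l l' : ZMod q × ZMod q × ZMod q} (h1 : l ∈ NB b k)
    (h2 : l' ∈ NB b k) (h3 : l ∈ NB b k') (h4 : l' ∈ NB b k') : k = k' ∨ l = l' := by
  cases b
  · rw [mem_NB_false] at h1 h2 h3 h4
    exact (no_digon h1 h3 h2 h4).symm
  · rw [mem_NB_true] at h1 h2 h3 h4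
    exact no_digon h1 h2 h3 h4

theorem NB_tri (b : Bool) {k1 k2 k3 l12 l23 l31 : ZMod q × ZMod q × ZMod q} (a1 : l12 ∈ NB b k1)
    (a2 : l12 ∈ NB b k2) (b2 : l23 ∈ NB b k2) (b3 : l23 ∈ NB b k3) (c3 : l31 ∈ NB b k3)
    (c1 : l31 ∈ NB b k1) (n12 : k1 ≠ k2) (n31 : k3 ≠ k1) (m1 : l12 ≠ l31)
    (m2 : l12 ≠ l23) : False := by
  cases b
  · rw [mem_NB_false] at *
    rcases no_tri a2 b2 b3 c3 c1 a1 with h | h | h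
    · exact m2 h
    · exact m1 h.symm
    · exact n12 h.symm
  · rw [mem_NB_true] at *
    rcases no_tri a1 a2 b2 b3 c3 c1 with h | h | h
    · exact n12 h
    · exact n31 h
    · exact m1 h

theorem cycles {V : Type*} (H : SimpleGraph V) (side : V → Bool)
    (ψ : V → ZMod q × ZMod q × ZMod q)
    (h1 : ∀ v u, H.Adj v u → side u ≠ side v)
    (h2 : ∀ v u, H.Adj v u → ψ u ∈ NB (side v) (ψ v))
    (h3 : ∀ v u u', H.Adj v u → H.Adj v u' → ψ u = ψ u' → u = u')
    (j : ℕ) (hj3 : 3 ≤ j) (hj7 : j ≤ 7) (f : SimpleGraph.cycleGraph j →g H)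
    (hf : Function.Injective f) : False := by
  have hs : ∀ u v, H.Adj u v → side v = !side u := by
    intro u v h
    have := h1 u v h
    revert this
    cases side u <;> cases side v <;> simp
  have hne : ∀ w u v, H.Adj w u → H.Adj w v → u ≠ v → ψ u ≠ ψ v := fun w u v a b c e => c (h3 w u v a b e)
  interval_cases j
  · have e0 := hs _ _ (f.map_adj (show (SimpleGraph.cycleGraph 3).Adj 0 1 by decide))
    have e1 := hs _ _ (f.map_adj (show (SimpleGraph.cycleGraph 3).Adj 1 2 by decide))
    have e2 := hs _ _ (f.map_adj (show (SimpleGraph.cycleGraph 3).Adj 2 0 by decide))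
    rw [e1, e0] at e2
    revert e2
    cases side (f 0) <;> simp
  · have g0 := (f.map_adj (show (SimpleGraph.cycleGraph 4).Adj 0 1 by decide))
    have g1 := (f.map_adj (show (SimpleGraph.cycleGraph 4).Adj 1 2 by decide))
    have g2 := (f.map_adj (show (SimpleGraph.cycleGraph 4).Adj 2 3 by decide))
    have g3 := (f.map_adj (show (SimpleGraph.cycleGraph 4).Adj 3 0 by decide))
    have s2 : side (f 2) = side (f 0) := by rw [hs _ _ g1, hs _ _ g0, Bool.not_not]
    have k2 := h2 _ _ g2
    have k1 := h2 _ _ g1.symm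
    rw [s2] at k1 k2
    have d1 : f 0 ≠ f 2 := hf.ne (by decide)
    have d2 : f 1 ≠ f 3 := hf.ne (by decide)
    rcases NB_digon (side (f 0)) (h2 _ _ g0) (h2 _ _ g3.symm) k1 k2 with h | h
    · exact d1 (h3 _ _ _ g0.symm g1 h)
    · exact d2 (h3 _ _ _ g0 g3.symm h)
  · have e0 := hs _ _ (f.map_adj (show (SimpleGraph.cycleGraph 5).Adj 0 1 by decide))
    have e1 := hs _ _ (f.map_adj (show (SimpleGraph.cycleGraph 5).Adj 1 2 by decide))
    have e2 := hs _ _ (f.map_adj (show (SimpleGraph.cycleGraph 5).Adj 2 3 by decide))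
    have e3 := hs _ _ (f.map_adj (show (SimpleGraph.cycleGraph 5).Adj 3 4 by decide))
    have e4 := hs _ _ (f.map_adj (show (SimpleGraph.cycleGraph 5).Adj 4 0 by decide))
    rw [e3, e2, e1, e0] at e4
    revert e4
    cases side (f 0) <;> simp
  · have g0 := (f.map_adj (show (SimpleGraph.cycleGraph 6).Adj 0 1 by decide))
    have g1 := (f.map_adj (show (SimpleGraph.cycleGraph 6).Adj 1 2 by decide))
    have g2 := (f.map_adj (show (SimpleGraph.cycleGraph 6).Adj 2 3 by decide))
    have g3 := (f.map_adj (show (SimpleGraph.cycleGraph 6).Adj 3 4 by decide))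
    have g4 := (f.map_adj (show (SimpleGraph.cycleGraph 6).Adj 4 5 by decide))
    have g5 := (f.map_adj (show (SimpleGraph.cycleGraph 6).Adj 5 0 by decide))
    have s2 : side (f 2) = side (f 0) := by rw [hs _ _ g1, hs _ _ g0, Bool.not_not]
    have s4 : side (f 4) = side (f 0) := by rw [hs _ _ g3, hs _ _ g2, Bool.not_not, s2]
    have k1 := h2 _ _ g1.symm
    have k2 := h2 _ _ g2
    have k3 := h2 _ _ g3.symm
    have k4 := h2 _ _ g4
    rw [s2] at k1 k2
    rw [s4] at k3 k4
    refine NB_tri (side (f 0)) (h2 _ _ g0) k1 k2 k3 k4 (h2 _ _ g5.symm) ?_ ?_ ?_ ?_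
    · exact hne _ _ _ g0.symm g1 (hf.ne (by decide))
    · exact hne _ _ _ g4.symm g5 (hf.ne (by decide))
    · exact hne _ _ _ g0 g5.symm (hf.ne (by decide))
    · exact hne _ _ _ g1.symm g2 (hf.ne (by decide))
  · have e0 := hs _ _ (f.map_adj (show (SimpleGraph.cycleGraph 7).Adj 0 1 by decide))
    have e1 := hs _ _ (f.map_adj (show (SimpleGraph.cycleGraph 7).Adj 1 2 by decide))
    have e2 := hs _ _ (f.map_adj (show (SimpleGraph.cycleGraph 7).Adj 2 3 by decide))
    have e3 := hs _ _ (f.map_adj (show (SimpleGraph.cycleGraph 7).Adj 3 4 by decide))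
    have e4 := hs _ _ (f.map_adj (show (SimpleGraph.cycleGraph 7).Adj 4 5 by decide))
    have e5 := hs _ _ (f.map_adj (show (SimpleGraph.cycleGraph 7).Adj 5 6 by decide))
    have e6 := hs _ _ (f.map_adj (show (SimpleGraph.cycleGraph 7).Adj 6 0 by decide))
    rw [e5, e4, e3, e2, e1, e0] at e6
    revert e6
    cases side (f 0) <;> simp
end Inc

open Classical in
theorem maxcut {V : Type*} [Fintype V] (G : SimpleGraph V) :
    ∃ side : V → Bool, ∀ v, (univ.filter (fun u => G.Adj v u)).card ≤
      2 * (univ.filter (fun u => G.Adj v u ∧ side u ≠ side v)).card := by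
  let sg : Bool → ℤ := fun b => if b then 1 else -1
  let a : V → V → ℤ := fun x y => if G.Adj x y then 1 else 0
  have ha : ∀ x y, a x y = a y x := fun x y => by simp only [a, G.adj_comm]
  have haa : ∀ x, a x x = 0 := fun x => by simp [a]
  let F : (V → Bool) → ℤ := fun σ => ∑ x, ∑ y, a x y * sg (σ x) * sg (σ y)
  obtain ⟨σ, hσ⟩ := Finite.exists_min F
  refine ⟨σ, fun v => ?_⟩
  let σ' : V → Bool := fun x => if x = v then !σ x else σ x
  have hsg : ∀ x, sg (σ' x) = sg (σ x) - (if x = v then 2 * sg (σ x) else 0) := by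
    intro x
    simp only [σ', sg]
    by_cases h : x = v
    · simp only [h, if_true]
      cases σ v <;> simp
    · simp [h]
  have hF : F σ' = F σ - 4 * ∑ y, a v y * sg (σ v) * sg (σ y) := by
    have e1 : ∀ x y, a x y * sg (σ' x) * sg (σ' y) = a x y * sg (σ x) * sg (σ y)
        - (if x = v then 2 * (a x y * sg (σ x) * sg (σ y)) else 0)
        - (if y = v then 2 * (a x y * sg (σ x) * sg (σ y)) else 0)
        := by
      intro x y
      rw [hsg, hsg]
      by_cases hx : x = v
      · by_cases hy : y = v
        · subst hx; subst hy; rw [haa]; simp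
        · simp only [hx, hy, if_true, if_false]; ring
      · by_cases hy : y = v
        · simp only [hx, hy, if_true, if_false]; ring
        · simp only [hx, hy, if_false]; ring
    simp only [F, e1, Finset.sum_sub_distrib]
    have e2 : ∑ x, ∑ y, (if x = v then 2 * (a x y * sg (σ x) * sg (σ y)) else 0)
        = 2 * ∑ y, a v y * sg (σ v) * sg (σ y) := by
      rw [Finset.sum_comm, Finset.mul_sum]
      refine Finset.sum_congr rfl (fun y _ => ?_)
      simp
    have e3 : ∑ x, ∑ y, (if y = v then 2 * (a x y * sg (σ x) * sg (σ y)) else 0)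
        = 2 * ∑ y, a v y * sg (σ v) * sg (σ y) := by
      rw [Finset.mul_sum]
      refine Finset.sum_congr rfl (fun y _ => ?_)
      simp only [Finset.sum_ite_eq', Finset.mem_univ, if_true]
      rw [ha]; ring
    rw [e2, e3]; ring
  have h1 := hσ σ'
  rw [hF] at h1
  have h2 : ∑ y, a v y * sg (σ v) * sg (σ y) ≤ 0 := by linarith
  have h3 : ∑ y, a v y * sg (σ v) * sg (σ y) =
      ((univ.filter (fun u => G.Adj v u)).card : ℤ)
        - 2 * (univ.filter (fun u => G.Adj v u ∧ σ u ≠ σ v)).card := by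
    rw [Finset.card_filter, Finset.card_filter]
    push_cast
    rw [Finset.mul_sum, ← Finset.sum_sub_distrib]
    refine Finset.sum_congr rfl (fun y _ => ?_)
    by_cases h : G.Adj v y
    · simp only [a, sg, h, if_true, true_and]
      cases σ v <;> cases σ y <;> simp
    · simp [a, h]
  rw [h3] at h2
  have : ((univ.filter (fun u => G.Adj v u)).card : ℤ) ≤
    2 * (univ.filter (fun u => G.Adj v u ∧ σ u ≠ σ v)).card := by linarith
  exact_mod_cast this

end GQ8

set_option linter.unusedSectionVars false
set_option linter.unusedVariables false
namespace GQ8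
open Finset

theorem choose_bd (q s : ℕ) (M : ℝ) (hM : 0 ≤ M) (h : (q : ℝ) ≤ M * s) :
    (q.choose s : ℝ) ≤ (Real.exp 1 * M) ^ s := by
  have h1 : (q.choose s : ℝ) ≤ (q : ℝ) ^ s / (s.factorial : ℝ) := Nat.choose_le_pow_div s q
  have h2 := Real.pow_div_factorial_le_exp (s : ℝ) (Nat.cast_nonneg s) s
  have h3 : Real.exp (s : ℝ) = Real.exp 1 ^ s := by rw [← Real.exp_nat_mul, mul_one]
  have hf : (0 : ℝ) < (s.factorial : ℝ) := by exact_mod_cast Nat.factorial_pos s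
  calc (q.choose s : ℝ) ≤ (q : ℝ) ^ s / (s.factorial : ℝ) := h1
    _ ≤ (M * s) ^ s / (s.factorial : ℝ) := by gcongr
    _ = M ^ s * ((s : ℝ) ^ s / (s.factorial : ℝ)) := by rw [mul_pow, mul_div_assoc]
    _ ≤ M ^ s * Real.exp 1 ^ s := by rw [← h3]; gcongr
    _ = _ := by rw [mul_pow]; ring

theorem exp_one_le : Real.exp 1 ≤ 3 := by
  have := Real.exp_one_lt_d9; linarith

theorem exp_neg_eq (s : ℕ) : Real.exp (-(s : ℝ)) = (Real.exp (-1)) ^ s := by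
  rw [← Real.exp_nat_mul]; congr 1; ring

theorem third_le : (1 : ℝ) / 3 ≤ Real.exp (-1) := by
  rw [Real.exp_neg, ← one_div]
  exact one_div_le_one_div_of_le (Real.exp_pos 1) exp_one_le

section Num
variable (t q s d : ℕ) (N : ℝ)

theorem num_E2 (ht : 54 ≤ t) (hq : (q : ℝ) ≤ 2 * (t : ℝ) ^ 9 * s) (hN0 : 0 < N)
    (hN : (t : ℝ) ^ 8 * d ≤ N) :
    (q.choose s : ℝ) * ((d : ℝ) / N) ^ (2 * s) ≤ Real.exp (-(s : ℝ)) := by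
  have htR : (54 : ℝ) ≤ t := by exact_mod_cast ht
  have ht0 : (0 : ℝ) < t := by linarith
  have h1 := choose_bd q s (2 * (t : ℝ) ^ 9) (by positivity) hq
  have h2 : (d : ℝ) / N ≤ 1 / (t : ℝ) ^ 8 := by
    rw [div_le_div_iff₀ hN0 (by positivity)]; linarith
  have e3 := exp_one_le
  calc _ ≤ (Real.exp 1 * (2 * (t : ℝ) ^ 9)) ^ s * (1 / (t : ℝ) ^ 8) ^ (2 * s) := by gcongr
    _ = (Real.exp 1 * (2 * (t : ℝ) ^ 9) * (1 / (t : ℝ) ^ 8) ^ 2) ^ s := by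
        rw [pow_mul, ← mul_pow]
    _ ≤ (Real.exp (-1)) ^ s := by
        gcongr
        refine le_trans ?_ third_le
        calc _ ≤ 3 * (2 * (t : ℝ) ^ 9) * (1 / (t : ℝ) ^ 8) ^ 2 := by gcongr
          _ = 6 / (t : ℝ) ^ 7 := by field_simp; ring
          _ ≤ 1 / 3 := by
            rw [div_le_div_iff₀ (by positivity) (by norm_num)]
            have : (t : ℝ) ^ 1 ≤ (t : ℝ) ^ 7 := pow_le_pow_right₀ (by linarith) (by norm_num)
            linarith
    _ = _ := (exp_neg_eq s).symm

theorem num_E3 (ht : 54 ≤ t) (hq : (q : ℝ) ≤ 2 * (t : ℝ) ^ 9 * s) (hN0 : 0 < N)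
    (hN : (t : ℝ) ^ 8 * d ≤ N) :
    (q.choose s : ℝ) * (((d : ℝ) / N) ^ s * Real.exp (-(8 * Real.log t * s / 4) +
      Real.exp (8 * Real.log t) * s * d / N)) ≤ Real.exp (-(s : ℝ)) := by
  have htR : (54 : ℝ) ≤ t := by exact_mod_cast ht
  have ht0 : (0 : ℝ) < t := by linarith
  have h1 := choose_bd q s (2 * (t : ℝ) ^ 9) (by positivity) hq
  have h2 : (d : ℝ) / N ≤ 1 / (t : ℝ) ^ 8 := by
    rw [div_le_div_iff₀ hN0 (by positivity)]; linarith
  have hexp : ∀ n : ℕ, Real.exp (n * Real.log t) = (t : ℝ) ^ n := by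
    intro n; rw [Real.exp_nat_mul, Real.exp_log ht0]
  have h8 : Real.exp (8 * Real.log t) = (t : ℝ) ^ 8 := by exact_mod_cast hexp 8
  have h22 : Real.exp (2 * Real.log t) = (t : ℝ) ^ 2 := by exact_mod_cast hexp 2
  have e3 := exp_one_le
  have h4 : Real.exp (-(8 * Real.log t * s / 4) + Real.exp (8 * Real.log t) * s * d / N)
      ≤ (1 / (t : ℝ) ^ 2 * Real.exp 1) ^ s := by
    have : (1 / (t : ℝ) ^ 2 * Real.exp 1) ^ s = Real.exp (s * (-(2 * Real.log t) + 1)) := by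
      rw [Real.exp_nat_mul, Real.exp_add, Real.exp_neg, h22, one_div]
    rw [this]
    apply Real.exp_le_exp.mpr
    rw [h8]
    have h5 : (t : ℝ) ^ 8 * s * d / N ≤ s := by
      rw [div_le_iff₀ hN0]
      have := mul_le_mul_of_nonneg_left hN (Nat.cast_nonneg (α := ℝ) s)
      linarith
    linarith
  calc _ ≤ (Real.exp 1 * (2 * (t : ℝ) ^ 9)) ^ s *
        ((1 / (t : ℝ) ^ 8) ^ s * (1 / (t : ℝ) ^ 2 * Real.exp 1) ^ s) := by gcongr
    _ = (Real.exp 1 * (2 * (t : ℝ) ^ 9) * ((1 / (t : ℝ) ^ 8) * (1 / (t : ℝ) ^ 2 * Real.exp 1))) ^ s := by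
        rw [← mul_pow, ← mul_pow]
    _ ≤ (Real.exp (-1)) ^ s := by
        gcongr
        refine le_trans ?_ third_le
        calc _ ≤ 3 * (2 * (t : ℝ) ^ 9) * ((1 / (t : ℝ) ^ 8) * (1 / (t : ℝ) ^ 2 * 3)) := by gcongr
          _ = 18 / (t : ℝ) := by field_simp; ring
          _ ≤ 1 / 3 := by
            rw [div_le_div_iff₀ (by positivity) (by norm_num)]
            linarith
    _ = _ := (exp_neg_eq s).symm

theorem num_E1 (ht : t = 2 ^ 20) (hs : 0 < s) (hq : (q : ℝ) ≤ 2 * (t : ℝ) ^ 9 * s)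
    (hq2 : (t : ℝ) ^ 9 * s ≤ q) (hN0 : 0 < N) (hN : N ≤ 64 * ((t : ℝ) ^ 8 * d)) :
    (q.choose (3 * s) : ℝ) * Real.exp (-(((q : ℝ) - (3 * s : ℕ)) * d / (4 * N)))
      ≤ Real.exp (-(s : ℝ)) := by
  have htR : (t : ℝ) = 2 ^ 20 := by rw [ht]; norm_num
  have ht0 : (0 : ℝ) < t := by rw [htR]; norm_num
  have ht1 : (6 : ℝ) ≤ t := by rw [htR]; norm_num
  have hs0 : (0 : ℝ) < s := by exact_mod_cast hs
  have h1 := choose_bd q (3 * s) (2 * (t : ℝ) ^ 9 / 3) (by positivity)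
    (by push_cast; linarith)
  have e3 := exp_one_le
  have h6 : 6 * (s : ℝ) ≤ q := by
    have : (t : ℝ) ^ 1 ≤ (t : ℝ) ^ 9 := pow_le_pow_right₀ (by linarith) (by norm_num)
    nlinarith
  have h2 : (t : ℝ) / 512 * s ≤ ((q : ℝ) - (3 * s : ℕ)) * d / (4 * N) := by
    rw [le_div_iff₀ (by positivity)]
    push_cast
    have a1 : (q : ℝ) / 2 ≤ q - 3 * s := by linarith
    have a2 : (q : ℝ) / 2 * d ≤ (q - 3 * s) * d := mul_le_mul_of_nonneg_right a1 (Nat.cast_nonneg _)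
    have a3 : (t : ℝ) / 512 * s * (4 * N) ≤ (t : ℝ) / 512 * s * (4 * (64 * ((t : ℝ) ^ 8 * d))) := by
      gcongr
    have a4 : (t : ℝ) ^ 9 * s * d ≤ q * d := mul_le_mul_of_nonneg_right hq2 (Nat.cast_nonneg _)
    have a5 : (t : ℝ) / 512 * s * (4 * (64 * ((t : ℝ) ^ 8 * d))) = (t : ℝ) ^ 9 * s * d / 2 := by ring
    linarith
  have h3 : Real.exp (-(((q : ℝ) - (3 * s : ℕ)) * d / (4 * N))) ≤ (Real.exp (-(t / 512))) ^ s := by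
    rw [← Real.exp_nat_mul]
    apply Real.exp_le_exp.mpr
    linarith
  calc _ ≤ (Real.exp 1 * (2 * (t : ℝ) ^ 9 / 3)) ^ (3 * s) * (Real.exp (-(t / 512))) ^ s := by gcongr
    _ = ((Real.exp 1 * (2 * (t : ℝ) ^ 9 / 3)) ^ 3 * Real.exp (-(t / 512))) ^ s := by
        rw [pow_mul, ← mul_pow]
    _ ≤ (Real.exp (-1)) ^ s := by
        gcongr
        have b1 : (Real.exp 1 * (2 * (t : ℝ) ^ 9 / 3)) ^ 3 ≤ (2 * (t : ℝ) ^ 9) ^ 3 := by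
          have : (0 : ℝ) < (t : ℝ) ^ 9 := by positivity
          apply pow_le_pow_left₀ (by positivity)
          nlinarith
        have b2 : (2 * (t : ℝ) ^ 9) ^ 3 = 2 ^ 543 := by
          rw [htR, ← pow_mul, ← pow_succ', ← pow_mul]
        have b3 : (2 : ℝ) ^ 543 ≤ Real.exp 543 := by
          have : Real.exp 543 = Real.exp 1 ^ 543 := by
            rw [← Real.exp_nat_mul]; norm_num
          rw [this]
          have := Real.exp_one_gt_d9
          gcongr
          linarith
        calc _ ≤ Real.exp 543 * Real.exp (-(t / 512)) := by
              gcongr; exact (b1.trans (le_of_eq b2)).trans b3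
          _ ≤ _ := by
              rw [← Real.exp_add]
              apply Real.exp_le_exp.mpr
              rw [htR]; norm_num
    _ = _ := (exp_neg_eq s).symm

theorem num_L (ht : 2 ≤ t) (hs : 0 < s) (hd : 0 < d) (hq : (q : ℝ) ≤ 2 * (t : ℝ) ^ 9 * s)
    (hN : (t : ℝ) ^ 8 * d ≤ (q : ℝ) ^ 3)
    (hs0 : 12 * (2 * t ^ 9) ^ 21 * Nat.factorial 22 ≤ s) :
    12 * ((q : ℝ) ^ 3) * Real.exp (-(s : ℝ)) * ((d : ℝ) + 1) ^ 6 ≤ 1 := by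
  have htR : (2 : ℝ) ≤ t := by exact_mod_cast ht
  have hsR : (0 : ℝ) < s := by exact_mod_cast hs
  have hdR : (1 : ℝ) ≤ d := by exact_mod_cast hd
  have h8 : (2 : ℝ) ≤ (t : ℝ) ^ 8 := by
    have : (t : ℝ) ^ 1 ≤ (t : ℝ) ^ 8 := pow_le_pow_right₀ (by linarith) (by norm_num)
    linarith
  have h1 : (d : ℝ) + 1 ≤ (q : ℝ) ^ 3 := by nlinarith
  have h2 := Real.pow_div_factorial_le_exp (s : ℝ) hsR.le 22
  have hf : (0 : ℝ) < (Nat.factorial 22 : ℝ) := by exact_mod_cast Nat.factorial_pos 22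
  rw [div_le_iff₀ hf] at h2
  have h3 : (12 * (2 * (t : ℝ) ^ 9) ^ 21 * (Nat.factorial 22 : ℝ)) ≤ s := by exact_mod_cast hs0
  have h4 : 12 * (q : ℝ) ^ 21 ≤ Real.exp s := by
    have a1 : 12 * (q : ℝ) ^ 21 ≤ 12 * (2 * (t : ℝ) ^ 9 * s) ^ 21 := by gcongr
    have a2 : 12 * (2 * (t : ℝ) ^ 9 * s) ^ 21 * (Nat.factorial 22 : ℝ) ≤
        Real.exp s * (Nat.factorial 22 : ℝ) := by
      refine le_trans ?_ h2
      calc 12 * (2 * (t : ℝ) ^ 9 * s) ^ 21 * (Nat.factorial 22 : ℝ)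
          = (12 * (2 * (t : ℝ) ^ 9) ^ 21 * (Nat.factorial 22 : ℝ)) * (s : ℝ) ^ 21 := by
            rw [mul_pow _ (s : ℝ)]; generalize (2 * (t : ℝ) ^ 9) ^ 21 = X; ring
        _ ≤ s * (s : ℝ) ^ 21 := by gcongr
        _ = (s : ℝ) ^ 22 := by ring
    exact a1.trans (le_of_mul_le_mul_right a2 hf)
  calc 12 * ((q : ℝ) ^ 3) * Real.exp (-(s : ℝ)) * ((d : ℝ) + 1) ^ 6
      ≤ 12 * ((q : ℝ) ^ 3) * Real.exp (-(s : ℝ)) * ((q : ℝ) ^ 3) ^ 6 := by gcongr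
    _ = (12 * (q : ℝ) ^ 21) * Real.exp (-(s : ℝ)) := by ring
    _ ≤ Real.exp s * Real.exp (-(s : ℝ)) := by gcongr
    _ = 1 := by rw [← Real.exp_add]; simp

theorem num_S2 (ht : 128 ≤ t) (hq : (q : ℝ) ≤ 2 * (t : ℝ) ^ 9 * s)
    (hN : (t : ℝ) ^ 8 * d ≤ N) (hN0 : 0 < N) :
    64 * (d * d * q : ℝ) ≤ N ^ 2 * s := by
  have htR : (128 : ℝ) ≤ t := by exact_mod_cast ht
  have ht0 : (0 : ℝ) < t := by linarith
  have h7 : (128 : ℝ) ≤ (t : ℝ) ^ 7 := by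
    have : (t : ℝ) ^ 1 ≤ (t : ℝ) ^ 7 := pow_le_pow_right₀ (by linarith) (by norm_num)
    linarith
  calc 64 * (d * d * q : ℝ) ≤ 64 * (d * d * (2 * (t : ℝ) ^ 9 * s)) := by gcongr
    _ = 128 * ((t : ℝ) ^ 9 * d ^ 2 * s) := by ring
    _ ≤ (t : ℝ) ^ 7 * ((t : ℝ) ^ 9 * d ^ 2 * s) := by gcongr
    _ = ((t : ℝ) ^ 8 * d) ^ 2 * s := by ring
    _ ≤ N ^ 2 * s := by gcongr

end Num

theorem exists_prime_cube (X : ℕ) (hX : 2 ≤ X) :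
    ∃ q : ℕ, q.Prime ∧ X ≤ q ^ 3 ∧ q ^ 3 ≤ 64 * X := by
  classical
  have hex : ∃ m : ℕ, X ≤ m ^ 3 := ⟨X, Nat.le_self_pow (by norm_num) X⟩
  set m := Nat.find hex with hm
  have h1 : X ≤ m ^ 3 := Nat.find_spec hex
  have h2 : 2 ≤ m := by
    by_contra h
    have : m ≤ 1 := by omega
    have : m ^ 3 ≤ 1 ^ 3 := Nat.pow_le_pow_left this 3
    omega
  have h3 : ¬ X ≤ (m - 1) ^ 3 := Nat.find_min hex (by omega)
  obtain ⟨q, hq, hq1, hq2⟩ := Nat.exists_prime_lt_and_le_two_mul m (by omega)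
  refine ⟨q, hq, h1.trans (Nat.pow_le_pow_left hq1.le 3), ?_⟩
  have h4 : q ≤ 4 * (m - 1) := by omega
  calc q ^ 3 ≤ (4 * (m - 1)) ^ 3 := Nat.pow_le_pow_left h4 3
    _ = 64 * (m - 1) ^ 3 := by ring
    _ ≤ 64 * X := by omega

theorem final (t : ℕ) (ht : t = 2 ^ 20) (S0 : ℕ) (hS0 : S0 = 12 * (2 * t ^ 9) ^ 21 * Nat.factorial 22)
    (d : ℕ) (hd : (t ^ 9 * S0) ^ 3 ≤ d) (V : Type) [Fintype V] (G : SimpleGraph V)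
    (hG : ∀ v, (G.neighborSet v).ncard = d) :
    ∃ H : SimpleGraph V, H ≤ G ∧
      (∀ j : ℕ, 3 ≤ j → j ≤ 7 → ¬ ∃ f : SimpleGraph.cycleGraph j →g H, Function.Injective f) ∧
      ∀ v : V, (1 / (4 * (t : ℝ) ^ 9)) * (d : ℝ) ^ ((1 : ℝ) / 3) ≤ ((H.neighborSet v).ncard : ℝ) := by
  classical
  have ht54 : 54 ≤ t := by rw [ht]; norm_num
  have ht128 : 128 ≤ t := by rw [ht]; norm_num
  have ht0 : 0 < t := by omega
  have ht0R : (0 : ℝ) < t := by exact_mod_cast ht0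
  have hS0p : 0 < S0 := by rw [hS0]; positivity
  have hdp : 0 < d := lt_of_lt_of_le (by positivity) hd
  obtain ⟨q, hqp, hq1, hq2⟩ := exists_prime_cube (t ^ 8 * d) (by
    have : 2 ≤ t ^ 8 := le_trans (by omega : 2 ≤ t) (Nat.le_self_pow (by norm_num) t)
    nlinarith)
  haveI : Fact q.Prime := ⟨hqp⟩
  have hdq : d ≤ q ^ 3 := le_trans (Nat.le_mul_of_pos_left d (by positivity)) hq1
  have hqS : t ^ 9 * S0 ≤ q := by
    by_contra h
    have := Nat.pow_lt_pow_left (not_le.mp h) (by norm_num : 3 ≠ 0)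
    omega
  have hR0 : 0 < t ^ 9 := by positivity
  set s := q / t ^ 9 with hs
  have hsS : S0 ≤ s := by
    rw [hs, Nat.le_div_iff_mul_le hR0]; linarith
  have hsp : 0 < s := by omega
  have hsq1 : t ^ 9 * s ≤ q := Nat.mul_div_le q (t ^ 9)
  have hsq2 : q ≤ 2 * t ^ 9 * s := by
    have h := Nat.lt_mul_div_succ q hR0
    rw [← hs] at h
    have : t ^ 9 * 1 ≤ t ^ 9 * s := Nat.mul_le_mul_left _ hsp
    rw [Nat.mul_add] at h
    rw [mul_assoc]
    omega
  have r1 : (t : ℝ) ^ 9 * s ≤ q := by exact_mod_cast hsq1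
  have r2 : (q : ℝ) ≤ 2 * (t : ℝ) ^ 9 * s := by exact_mod_cast hsq2
  have r3 : (t : ℝ) ^ 8 * d ≤ (q : ℝ) ^ 3 := by exact_mod_cast hq1
  have r4 : (q : ℝ) ^ 3 ≤ 64 * ((t : ℝ) ^ 8 * d) := by exact_mod_cast hq2
  have hcard : Fintype.card (ZMod q × ZMod q × ZMod q) = q ^ 3 := by
    rw [Fintype.card_prod, Fintype.card_prod, ZMod.card]; ring
  have hcardR : (Fintype.card (ZMod q × ZMod q × ZMod q) : ℝ) = (q : ℝ) ^ 3 := by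
    rw [hcard]; push_cast; rfl
  have hN0 : (0 : ℝ) < (q : ℝ) ^ 3 := by
    have : (0 : ℝ) < q := by exact_mod_cast hqp.pos
    positivity
  obtain ⟨side, hside0⟩ := maxcut G
  let nb : V → Finset V := fun v => univ.filter (fun u => G.Adj v u ∧ side u ≠ side v)
  have hnb : ∀ u v, u ∈ nb v ↔ G.Adj v u ∧ side u ≠ side v := fun u v => by simp [nb]
  have hside : ∀ u v, u ∈ nb v → side u ≠ side v := fun u v h => ((hnb u v).mp h).2
  have hsymm : ∀ u v, u ∈ nb v → v ∈ nb u := fun u v h => by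
    rw [hnb] at h ⊢
    exact ⟨h.1.symm, h.2.symm⟩
  have hdeg : ∀ v, (univ.filter (fun u => G.Adj v u)).card = d := by
    intro v
    rw [← hG v, ← Set.ncard_coe_finset]
    congr 1
    ext u; simp
  have hd1 : ∀ v, (nb v).card ≤ d := by
    intro v
    rw [← hdeg v]
    apply Finset.card_le_card
    intro u hu
    simp only [Finset.mem_filter, Finset.mem_univ, true_and]
    exact ((hnb u v).mp hu).1
  have hd2 : ∀ v, d ≤ 2 * (nb v).card := by
    intro v
    rw [← hdeg v]
    exact hside0 v
  have h3s : 3 * s ≤ q := by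
    have : 3 ≤ t ^ 9 := le_trans (by omega : 3 ≤ t) (Nat.le_self_pow (by norm_num) t)
    exact (Nat.mul_le_mul_right s this).trans hsq1
  obtain ⟨φ, hφ⟩ := stage1 (C := ZMod q × ZMod q × ZMod q) nb side hside hsymm d s q hdp hd1 hd2
    (8 * Real.log t) (by
      have : 0 ≤ Real.log t := Real.log_natCast_nonneg t
      positivity)
    (fun v k => NB (side v) k) (fun v k => NB_card _ _) h3s (Real.exp (-(s : ℝ)))
    (by rw [hcardR]; exact num_E1 t q s d _ ht hsp r2 r1 hN0 r4)
    (by rw [hcardR]; exact num_E2 t q s d _ ht54 r2 hN0 r3)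
    (by rw [hcardR]; exact num_E3 t q s d _ ht54 r2 hN0 r3)
    (by rw [hcardR]; exact num_L t q s d (by omega) hsp hdp r2 r3 (hS0 ▸ hsS))
  obtain ⟨H, ψ, hH1, hH2, hH3⟩ := assemble (C := ZMod q × ZMod q × ZMod q) nb side hside hsymm d s q
    hdp hsp hd1 hd2 NB NB_card NB_symm
    (by
      rw [hcard]
      have : 4 ≤ t ^ 8 := le_trans (by omega : 4 ≤ t) (Nat.le_self_pow (by norm_num) t)
      exact (Nat.mul_le_mul_right d this).trans hq1)
    (by rw [hcardR]; exact num_S2 t q s d _ ht128 r2 r3 hN0) φ hφ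
  refine ⟨H, ?_, ?_, ?_⟩
  · intro v u h
    exact ((hnb u v).mp (hH1 v u h).1).1
  · rintro j hj3 hj7 ⟨f, hf⟩
    exact cycles H side ψ (fun v u h => hside u v (hH1 v u h).1) (fun v u h => (hH1 v u h).2) hH2
      j hj3 hj7 f hf
  · intro v
    obtain ⟨T, hT1, hT2⟩ := hH3 v
    have h1 : (T.card : ℝ) ≤ ((H.neighborSet v).ncard : ℝ) := by
      rw [← Set.ncard_coe_finset]
      exact_mod_cast Set.ncard_le_ncard (fun u hu => hT1 u hu) (Set.toFinite _)
    refine le_trans ?_ (hT2.trans h1)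
    have h2 : (d : ℝ) ^ ((1 : ℝ) / 3) ≤ q := by
      have hq0 : (0 : ℝ) ≤ q := Nat.cast_nonneg q
      have h3 : (d : ℝ) ≤ (q : ℝ) ^ 3 := by exact_mod_cast hdq
      calc (d : ℝ) ^ ((1 : ℝ) / 3) ≤ ((q : ℝ) ^ 3) ^ ((1 : ℝ) / 3) :=
            Real.rpow_le_rpow (Nat.cast_nonneg d) h3 (by norm_num)
        _ = q := by
            rw [← Real.rpow_natCast, ← Real.rpow_mul hq0]; norm_num
    have hRR : (0 : ℝ) < (t : ℝ) ^ 9 := by positivity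
    rw [div_mul_eq_mul_div, one_mul, div_le_div_iff₀ (by positivity) (by norm_num)]
    nlinarith

end GQ8


theorem statement11 :
    ∃ (c : ℝ) (d₀ : ℕ), 0 < c ∧
      ∀ d : ℕ, d₀ ≤ d →
        ∀ (V : Type) [Fintype V] (G : SimpleGraph V), RegularDeg G d →
          ∃ H : SimpleGraph V, H ≤ G ∧
            (∀ j : ℕ, 3 ≤ j → j ≤ 7 → ¬ ContainsCopy (cycleGraph j) H) ∧
            ∀ v : V, c * (d : ℝ) ^ ((1 : ℝ) / 3) ≤ (deg H v : ℝ) := by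
  obtain ⟨t, ht⟩ : ∃ t : ℕ, t = 2 ^ 20 := ⟨_, rfl⟩
  obtain ⟨S0, hS0⟩ : ∃ S0 : ℕ, S0 = 12 * (2 * t ^ 9) ^ 21 * Nat.factorial 22 := ⟨_, rfl⟩
  have ht0 : 0 < t := by rw [ht]; norm_num
  refine ⟨1 / (4 * (t : ℝ) ^ 9), (t ^ 9 * S0) ^ 3, by positivity, ?_⟩
  intro d hd V _ G hG
  exact GQ8.final t ht S0 hS0 d hd V G hG
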